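/- Suppose n ≥ 3 and 1 < p < ∞. Let φ be the restriction to B of a Möbius transformation of ℝ̂ⁿ with φ(B) ⊆ B and let ψ = c·|Dφ|^{(n−2)/2} for a constant c. Then ψ is bounded on B, W_{φ,ψ} is bounded on h^p(B), and ‖W_{φ,ψ}‖_{h^p→h^p} ≤ ((1+|φ(0)|)·(1−|φ(0)|)^{1−n}·|ψ(0)|)^{1/p}·‖ψ‖_∞^{1−1/p}. -/

import Mathlib

/-!
The constant in the bound comes from the harmonicity of weighted compositions with Möbius maps.

A Möbius transformation is a similarity, or an inversion followed by a similarity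
(`IsMobiusHat.normal_form`). The chain rule then computes `|Dφ|`, and `|Dφ|^((n-2)/2) (f ∘ φ)` is,
up to translations and constants, either `f` composed with a similarity or a Kelvin transform; so
it is harmonic whenever `f` is (`confWt_spec`, resting on `lap_affine` and `kelvin_harm`). The
weight is bounded because `φ` maps the ball into itself.

For the estimate fix `r < 1` and choose `R < 1` with `φ(rB)` inside the ball of radius `R`. The
Poisson formula on that ball and Jensen's inequality give
`|f(φ(rζ))|^p ≤ ∫ P(φ(rζ)/R, η) |f(Rη)|^p dσ(η)` (`SphProb.rpow_norm_le`). Multiply by the weight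
and integrate in `ζ`. For each `η` the function `x ↦ |Dφ(rx)|^((n-2)/2) P(φ(rx)/R, η)` is harmonic,
so its mean over the sphere is its value at `0`, which Harnack's bound `poissonK_le` controls
(`SphProb.estimate_at`). Letting `R → 1` gives `SphProb.estimate`, and
`|ψ|^p ≤ ‖ψ‖_∞^(p-1) |ψ|` turns it into the bound on the integral means (`wco_mean_le`).

The Poisson formula is proved from the maximum principle. Differentiation under the integral sign
is avoided by working with functions whose normalized second differences tend to `0` (`GenHarm`),
a property that passes through the Poisson integral by dominated convergence. Of the surface
measure only rotation invariance, support and total mass `1` are used (`SphProb`). If the Hausdorff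
measure of the sphere were `0` or `∞` the normalized measure would vanish and the bound would be
trivial (`sphMeasure_spec`), so its actual value is not needed.
-/

open MeasureTheory Metric Set Filter
open scoped ENNReal NNReal Topology InnerProductSpace Classical

noncomputable section

/-- Euclidean space `ℝⁿ`. -/
abbrev Eucl (n : ℕ) := EuclideanSpace ℝ (Fin n)

/-- The open unit ball `B` in `ℝⁿ`. -/
def uBall (n : ℕ) : Set (Eucl n) := Metric.ball 0 1

/-- The unit sphere `S = ∂B` in `ℝⁿ`. -/
def uSphere (n : ℕ) : Set (Eucl n) := Metric.sphere 0 1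

/-- The normalized surface area measure `σ` on the unit sphere (as a measure on `ℝⁿ`
supported on `S`), normalized so that `σ(S) = 1`. -/
def sphMeasure (n : ℕ) : Measure (Eucl n) :=
  ((Measure.hausdorffMeasure ((n : ℝ) - 1) (uSphere n))⁻¹ : ℝ≥0∞) •
    (Measure.hausdorffMeasure ((n : ℝ) - 1) : Measure (Eucl n)).restrict (uSphere n)

/-- `i`-th standard basis vector of `ℝⁿ`. -/
def basisV (n : ℕ) (i : Fin n) : Eucl n := EuclideanSpace.single i 1

/-- The Laplacian `Δf(x) = ∑ᵢ ∂²f/∂xᵢ²(x)`. -/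
def lap {n : ℕ} {F : Type*} [NormedAddCommGroup F] [NormedSpace ℝ F]
    (f : Eucl n → F) (x : Eucl n) : F :=
  ∑ i : Fin n, iteratedFDeriv ℝ 2 f x ![basisV n i, basisV n i]

/-- `f` is harmonic on `s`: twice continuously differentiable with vanishing Laplacian. -/
def HarmOn {n : ℕ} {F : Type*} [NormedAddCommGroup F] [NormedSpace ℝ F]
    (f : Eucl n → F) (s : Set (Eucl n)) : Prop :=
  ContDiffOn ℝ 2 f s ∧ ∀ x ∈ s, lap f x = 0

/-- The Jacobian matrix `Dφ(x) = (∂φ⁽ⁱ⁾/∂xⱼ)` of a map `φ : ℝⁿ → ℝⁿ`. -/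
def jacMatrix {n : ℕ} (φ : Eucl n → Eucl n) (x : Eucl n) : Matrix (Fin n) (Fin n) ℝ :=
  Matrix.of fun i j => fderiv ℝ φ x (basisV n j) i

/-- `|Dφ(x)| := |J_φ(x)|^{1/n}`, where `J_φ` is the Jacobian determinant. -/
def normDeriv {n : ℕ} (φ : Eucl n → Eucl n) (x : Eucl n) : ℝ :=
  |(jacMatrix φ x).det| ^ ((n : ℝ)⁻¹)

/-- The weighted composition operator `W_{φ,ψ} f = ψ · (f ∘ φ)`. -/
def wco {n : ℕ} (φ : Eucl n → Eucl n) (ψ : Eucl n → ℂ) (f : Eucl n → ℂ) : Eucl n → ℂ :=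
  fun x => ψ x * f (φ x)

/-- The set of values `(∫_S |f(rζ)|^p dσ(ζ))^{1/p}`, `0 ≤ r < 1`. -/
def hpNormSet (n : ℕ) (p : ℝ) (f : Eucl n → ℂ) : Set ℝ :=
  (fun r : ℝ => (∫ ζ, ‖f (r • ζ)‖ ^ p ∂(sphMeasure n)) ^ (1 / p)) '' Set.Ico (0 : ℝ) 1

/-- The set of values `|f(x)|`, `x ∈ B`. -/
def hInfSet (n : ℕ) (f : Eucl n → ℂ) : Set ℝ := (fun x => ‖f x‖) '' uBall n

/-- Membership in the harmonic Hardy space `h^p(B)`, `1 ≤ p ≤ ∞`. -/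
def MemHp (n : ℕ) (p : ℝ≥0∞) (f : Eucl n → ℂ) : Prop :=
  HarmOn f (uBall n) ∧
    if p = ⊤ then BddAbove (hInfSet n f) else BddAbove (hpNormSet n p.toReal f)

/-- The `h^p(B)` norm, `1 ≤ p ≤ ∞`. -/
def hpNorm (n : ℕ) (p : ℝ≥0∞) (f : Eucl n → ℂ) : ℝ :=
  if p = ⊤ then sSup (hInfSet n f) else sSup (hpNormSet n p.toReal f)

/-- The operator norm of a map `T` on `h^p(B)`. -/
def opNormHp (n : ℕ) (p : ℝ≥0∞) (T : (Eucl n → ℂ) → (Eucl n → ℂ)) : ℝ :=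
  sInf {C : ℝ | 0 ≤ C ∧ ∀ f, MemHp n p f → hpNorm n p (T f) ≤ C * hpNorm n p f}

/-- The one-point compactification `ℝ̂ⁿ = ℝⁿ ∪ {∞}`. -/
abbrev EuclHat (n : ℕ) := OnePoint (Eucl n)

/-- Reflection in the sphere `S(a, r)`, as a self-map of `ℝ̂ⁿ`:
`x ↦ a + r²(x−a)/|x−a|²`, with `a ↦ ∞` and `∞ ↦ a`. -/
def sphereRefl (n : ℕ) (a : Eucl n) (r : ℝ) : EuclHat n → EuclHat n :=
  OnePoint.rec (↑a)
    (fun x => if x = a then OnePoint.infty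
      else ↑(a + (r ^ 2 / ‖x - a‖ ^ 2) • (x - a)))

/-- Reflection in the hyperplane `{x : x·a = t}` (`a` a unit vector), as a self-map of `ℝ̂ⁿ`:
`x ↦ x − 2(x·a − t)a`, with `∞ ↦ ∞`. -/
def hyperRefl (n : ℕ) (a : Eucl n) (t : ℝ) : EuclHat n → EuclHat n :=
  OnePoint.rec OnePoint.infty
    (fun x => ↑(x - (2 * (⟪x, a⟫_ℝ - t)) • a))

/-- A reflection of `ℝ̂ⁿ` in a sphere or a hyperplane. -/
def IsReflection (n : ℕ) (f : EuclHat n → EuclHat n) : Prop :=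
  (∃ a r, 0 < r ∧ f = sphereRefl n a r) ∨
    (∃ a t, ‖a‖ = 1 ∧ f = hyperRefl n a t)

/-- A Möbius transformation of `ℝ̂ⁿ`: a finite composition of reflections in
spheres or hyperplanes. -/
def IsMobiusHat (n : ℕ) (g : EuclHat n → EuclHat n) : Prop :=
  ∃ L : List (EuclHat n → EuclHat n), L ≠ [] ∧ (∀ f ∈ L, IsReflection n f) ∧
    g = L.foldr (· ∘ ·) id

/-- `φ : ℝⁿ → ℝⁿ` is, on `Ω`, the restriction of a Möbius transformation of `ℝ̂ⁿ`. -/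
def IsMobiusRestr (n : ℕ) (φ : Eucl n → Eucl n) (Ω : Set (Eucl n)) : Prop :=
  ∃ g : EuclHat n → EuclHat n, IsMobiusHat n g ∧ ∀ x ∈ Ω, g ↑x = ↑(φ x)

/-- `φ ∈ Möb(B)`: `φ` agrees, on an open neighborhood of the closed unit ball, with a
Möbius transformation of `ℝ̂ⁿ`, and `φ` maps `B` bijectively onto `B`.  (Such a `φ` is
the canonical extension of the Möbius transformation to the closed unit ball.) -/
def IsMobiusBall (n : ℕ) (φ : Eucl n → Eucl n) : Prop :=
  (∃ U : Set (Eucl n), IsOpen U ∧ Metric.closedBall 0 1 ⊆ U ∧ IsMobiusRestr n φ U) ∧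
    Set.BijOn φ (uBall n) (uBall n)

/-- The nontangential approach region `Γ_δ(ζ) = {x ∈ B : |x − ζ| < (δ/2)(1 − |x|²)}`. -/
def ntRegion (n : ℕ) (δ : ℝ) (ζ : Eucl n) : Set (Eucl n) :=
  {x | x ∈ uBall n ∧ ‖x - ζ‖ < δ / 2 * (1 - ‖x‖ ^ 2)}

/-- `g` has nontangential limit `L` at `ζ ∈ S`. -/
def HasNTLimit (n : ℕ) (g : Eucl n → ℂ) (ζ : Eucl n) (L : ℂ) : Prop :=
  ∀ δ : ℝ, 1 < δ → Filter.Tendsto g (nhdsWithin ζ (ntRegion n δ ζ)) (nhds L)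

/-- The Poisson kernel `P(x, ζ) = (1 − |x|²)/|x − ζ|ⁿ` for the unit ball. -/
def poissonK (n : ℕ) (x ζ : Eucl n) : ℝ := (1 - ‖x‖ ^ 2) / ‖x - ζ‖ ^ n

/-- The extended Poisson kernel `P_y(x) = (1 − |x|²|y|²)/(1 − 2x·y + |x|²|y|²)^{n/2}`. -/
def extPoisson (n : ℕ) (y x : Eucl n) : ℝ :=
  (1 - ‖x‖ ^ 2 * ‖y‖ ^ 2) / (1 - 2 * ⟪x, y⟫_ℝ + ‖x‖ ^ 2 * ‖y‖ ^ 2) ^ ((n : ℝ) / 2)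

/-- The Gauss hypergeometric function `₂F₁(a, b; c; r) = ∑ₖ (a)ₖ(b)ₖ/((c)ₖ k!) rᵏ`. -/
def gaussHyper (a b c r : ℝ) : ℝ :=
  ∑' k : ℕ, ((ascPochhammer ℝ k).eval a * (ascPochhammer ℝ k).eval b) /
    ((ascPochhammer ℝ k).eval c * (Nat.factorial k)) * r ^ k

/-- A linear operator on (the function class) `h^p(B)`. -/
def IsLinOnHp (n : ℕ) (p : ℝ≥0∞) (T : (Eucl n → ℂ) → (Eucl n → ℂ)) : Prop :=
  (∀ f, MemHp n p f → MemHp n p (T f)) ∧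
    (∀ f g, MemHp n p f → MemHp n p g → T (f + g) = T f + T g) ∧
    (∀ (c : ℂ) (f), MemHp n p f → T (c • f) = c • T f)

/-- A compact operator on `h^p(B)`: a linear operator mapping the unit ball of `h^p(B)`
to a totally bounded set. -/
def IsCompactOnHp (n : ℕ) (p : ℝ≥0∞) (K : (Eucl n → ℂ) → (Eucl n → ℂ)) : Prop :=
  IsLinOnHp n p K ∧
    ∀ ε : ℝ, 0 < ε → ∃ G : Finset (Eucl n → ℂ),
      ∀ f, MemHp n p f → hpNorm n p f ≤ 1 → ∃ g ∈ G, hpNorm n p (K f - g) ≤ ε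

/-- The essential norm of an operator `T` on `h^p(B)`: the distance, in operator norm,
from `T` to the compact operators on `h^p(B)`. -/
def essNormHp (n : ℕ) (p : ℝ≥0∞) (T : (Eucl n → ℂ) → (Eucl n → ℂ)) : ℝ :=
  sInf {c : ℝ | ∃ K, IsCompactOnHp n p K ∧ opNormHp n p (fun f => T f - K f) = c}

/-- The duality pairing `⟨f, g⟩ = ∫_S f* g* dσ`, relative to a boundary-function
assignment `bd`. -/
def hpPairing (n : ℕ) (bd : (Eucl n → ℂ) → (Eucl n → ℂ)) (f g : Eucl n → ℂ) : ℂ :=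
  ∫ ζ, bd f ζ * bd g ζ ∂(sphMeasure n)

end

/-! ### Second differences and the maximum principle -/

lemma hasDerivAt_line {V F : Type*} [NormedAddCommGroup V] [NormedSpace ℝ V]
    [NormedAddCommGroup F] [NormedSpace ℝ F] {w : V → F} {x e : V} {s : ℝ}
    (h : DifferentiableAt ℝ w (x + s • e)) :
    HasDerivAt (fun t : ℝ => w (x + t • e)) (fderiv ℝ w (x + s • e) e) s := by
  have h1 : HasDerivAt (fun t : ℝ => x + t • e) e s := by
    simpa using ((hasDerivAt_id s).smul_const e).const_add x
  exact h.hasFDerivAt.comp_hasDerivAt s h1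

/-- If the second derivative stays within `C` of `a` on `[-T, T]`, the symmetric second difference
at `0` is `a t²` up to an error `2 C t²`. -/
lemma second_diff_one_dim (k k' k'' : ℝ → ℝ) (T C a : ℝ)
    (h1 : ∀ s, |s| ≤ T → HasDerivAt k (k' s) s)
    (h2 : ∀ s, |s| ≤ T → HasDerivAt k' (k'' s) s)
    (h3 : ∀ s, |s| ≤ T → |k'' s - a| ≤ C) (t : ℝ) (ht : 0 ≤ t) (htT : t ≤ T) :
    |k t + k (-t) - 2 * k 0 - a * t ^ 2| ≤ 2 * C * t ^ 2 := by
  have hC : 0 ≤ C := le_trans (abs_nonneg _) (h3 0 (by simpa using ht.trans htT))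
  have hd1 : ∀ s ∈ Icc (0 : ℝ) t, HasDerivAt (fun s => k' s - k' (-s) - 2 * a * s)
      (k'' s + k'' (-s) - 2 * a) s := by
    intro s hs
    have hsT : |s| ≤ T := by rw [abs_of_nonneg hs.1]; exact hs.2.trans htT
    have e1 := h2 s hsT
    have e2 := (h2 (-s) (by rwa [abs_neg])).comp s (hasDerivAt_neg s)
    have e3 := (hasDerivAt_id s).const_mul (2 * a)
    exact ((e1.sub e2).sub e3).congr_deriv (by ring)
  have hb1 : ∀ s ∈ Icc (0 : ℝ) t, ‖k' s - k' (-s) - 2 * a * s‖ ≤ 2 * C * t := by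
    intro s hs
    have := norm_image_sub_le_of_norm_deriv_le_segment' (a := 0) (b := t) (C := 2 * C)
      (fun x hx => (hd1 x hx).hasDerivWithinAt) (by
        intro x hx
        have hxT : |x| ≤ T := by rw [abs_of_nonneg hx.1]; exact hx.2.le.trans htT
        have i1 := h3 x hxT
        have i2 := h3 (-x) (by rwa [abs_neg])
        rw [Real.norm_eq_abs, abs_le]
        rw [abs_le] at i1 i2
        constructor <;> linarith [i1.1, i1.2, i2.1, i2.2]) s hs
    simp only [neg_zero, sub_self, mul_zero, sub_zero] at this
    refine this.trans ?_
    gcongr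
    exact hs.2
  have hd0 : ∀ s ∈ Icc (0 : ℝ) t, HasDerivAt (fun s => k s + k (-s) - 2 * k 0 - a * s ^ 2)
      (k' s - k' (-s) - 2 * a * s) s := by
    intro s hs
    have hsT : |s| ≤ T := by rw [abs_of_nonneg hs.1]; exact hs.2.trans htT
    have e1 := h1 s hsT
    have e2 := (h1 (-s) (by rwa [abs_neg])).comp s (hasDerivAt_neg s)
    have e3 := ((hasDerivAt_id s).pow 2).const_mul a
    refine (((e1.add e2).sub_const (2 * k 0)).sub e3).congr_deriv ?_
    simp; ring
  have := norm_image_sub_le_of_norm_deriv_le_segment' (a := 0) (b := t) (C := 2 * C * t)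
    (fun x hx => (hd0 x hx).hasDerivWithinAt) (fun x hx => hb1 x ⟨hx.1, hx.2.le⟩) t ⟨ht, le_rfl⟩
  have e : k 0 + k (-0) - 2 * k 0 - a * 0 ^ 2 = 0 := by simp; ring
  rw [e, sub_zero, sub_zero, Real.norm_eq_abs] at this
  calc _ ≤ _ := this
    _ = _ := by ring

lemma second_diff {V : Type*} [NormedAddCommGroup V] [NormedSpace ℝ V] (w : V → ℝ) (x e : V)
    (T C a : ℝ) (h1 : ∀ s : ℝ, |s| ≤ T → ContDiffAt ℝ 2 w (x + s • e))
    (h3 : ∀ s : ℝ, |s| ≤ T → |fderiv ℝ (fderiv ℝ w) (x + s • e) e e - a| ≤ C)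
    (t : ℝ) (ht : 0 ≤ t) (htT : t ≤ T) :
    |w (x + t • e) + w (x - t • e) - 2 * w x - a * t ^ 2| ≤ 2 * C * t ^ 2 := by
  have := second_diff_one_dim (fun t => w (x + t • e)) (fun t => fderiv ℝ w (x + t • e) e)
    (fun t => fderiv ℝ (fderiv ℝ w) (x + t • e) e e) T C a
    (fun s hs => hasDerivAt_line ((h1 s hs).differentiableAt (by norm_num)))
    (fun s hs => by
      have hd : DifferentiableAt ℝ (fderiv ℝ w) (x + s • e) :=
        ((h1 s hs).fderiv_right (m := 1) (by norm_num)).differentiableAt (by norm_num)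
      have := (hasDerivAt_line hd).clm_apply (hasDerivAt_const s e)
      simpa using this) h3 t ht htT
  simpa [sub_eq_add_neg] using this

lemma lap_eq {n : ℕ} {F : Type*} [NormedAddCommGroup F] [NormedSpace ℝ F]
    (f : Eucl n → F) (x : Eucl n) :
    lap f x = ∑ i, fderiv ℝ (fderiv ℝ f) x (basisV n i) (basisV n i) := by
  simp [lap, iteratedFDeriv_two_apply]

/-- The second-order central difference `∑ᵢ w(x + t eᵢ) + w(x - t eᵢ) - 2 w(x)`. -/
noncomputable def discLap {n : ℕ} (w : Eucl n → ℝ) (x : Eucl n) (t : ℝ) : ℝ :=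
  ∑ i, (w (x + t • basisV n i) + w (x - t • basisV n i) - 2 * w x)

/-- Harmonicity at `x` in the generalized sense: the discrete Laplacians of `w` at `x`, divided
by `t²`, tend to `0`. Unlike `lap w x = 0`, this passes under an integral sign by dominated
convergence, and it still suffices for the maximum principle. -/
def GenHarm {n : ℕ} (w : Eucl n → ℝ) (x : Eucl n) : Prop :=
  Tendsto (fun t => discLap w x t / t ^ 2) (𝓝[>] 0) (𝓝 0)

lemma norm_basisV {n : ℕ} (i : Fin n) : ‖basisV n i‖ = 1 := by
  simp [basisV]

lemma tendsto_discLap {n : ℕ} {w : Eucl n → ℝ} {x : Eucl n} (h : ContDiffAt ℝ 2 w x) :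
    Tendsto (fun t => discLap w x t / t ^ 2) (𝓝[>] 0) (𝓝 (lap w x)) := by
  have hcd : ∀ᶠ y in 𝓝 x, ContDiffAt ℝ 2 w y := h.eventually (by simp)
  have hcont : ContinuousAt (fderiv ℝ (fderiv ℝ w)) x :=
    ((h.fderiv_right (m := 1) (by norm_num)).fderiv_right (m := 0) (by norm_num)).continuousAt
  have key : ∀ i, Tendsto (fun t : ℝ => (w (x + t • basisV n i) + w (x - t • basisV n i)
      - 2 * w x) / t ^ 2) (𝓝[>] 0) (𝓝 (fderiv ℝ (fderiv ℝ w) x (basisV n i) (basisV n i))) := by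
    intro i
    set e := basisV n i
    set a := fderiv ℝ (fderiv ℝ w) x e e
    rw [Metric.tendsto_nhds]
    intro ε hε
    have hc2 : ∀ᶠ y in 𝓝 x, |fderiv ℝ (fderiv ℝ w) y e e - a| < ε / 3 := by
      have : ContinuousAt (fun y => fderiv ℝ (fderiv ℝ w) y e e) x :=
        (hcont.clm_apply continuousAt_const).clm_apply continuousAt_const
      have := Metric.tendsto_nhds.1 this.tendsto (ε / 3) (by positivity)
      simpa [Real.dist_eq] using this
    obtain ⟨δ, hδ, hball⟩ := Metric.eventually_nhds_iff.1 (hcd.and hc2)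
    have hmem : ∀ s : ℝ, |s| ≤ δ / 2 → dist (x + s • e) x < δ := by
      intro s hs
      rw [dist_eq_norm, add_sub_cancel_left, norm_smul, norm_basisV, mul_one, Real.norm_eq_abs]
      linarith
    filter_upwards [Ioo_mem_nhdsGT (show (0 : ℝ) < δ / 2 by positivity)] with t ht
    have := second_diff w x e (δ / 2) (ε / 3) a (fun s hs => (hball (hmem s hs)).1)
      (fun s hs => (hball (hmem s hs)).2.le) t ht.1.le ht.2.le
    have ht2 : 0 < t ^ 2 := pow_pos ht.1 2
    rw [Real.dist_eq, div_sub' ht2.ne', abs_div, abs_of_pos ht2, div_lt_iff₀ ht2, mul_comm _ a]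
    refine this.trans_lt ?_
    nlinarith
  have := tendsto_finsetSum Finset.univ (fun i _ => key i)
  rw [lap_eq]
  refine this.congr ?_
  intro t
  simp only [discLap, Finset.sum_div]

lemma genHarm_of_lap {n : ℕ} {w : Eucl n → ℝ} {x : Eucl n} (h : ContDiffAt ℝ 2 w x)
    (h0 : lap w x = 0) : GenHarm w x := by
  have := tendsto_discLap h
  rwa [h0] at this

lemma GenHarm.sub {n : ℕ} {v w : Eucl n → ℝ} {x : Eucl n} (hv : GenHarm v x) (hw : GenHarm w x) :
    GenHarm (fun y => v y - w y) x := by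
  have := Tendsto.sub hv hw
  rw [sub_zero] at this
  refine this.congr fun t => ?_
  rw [← sub_div, discLap, discLap, discLap, ← Finset.sum_sub_distrib]
  congr 1
  exact Finset.sum_congr rfl fun i _ => by ring

lemma genHarm_const {n : ℕ} (c : ℝ) (x : Eucl n) : GenHarm (fun _ => c) x := by
  refine tendsto_const_nhds.congr fun t => ?_
  simp [discLap, two_mul]

/-- Maximum principle: at an interior maximum of the perturbation `w + κ|x|²` the second
differences are nonpositive, while the limit of the normalized ones is `2nκ > 0`. -/
lemma max_principle {n : ℕ} (hn : 0 < n) {w : Eucl n → ℝ} {s M : ℝ}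
    (hc : ContinuousOn w (closedBall 0 s)) (hg : ∀ x ∈ ball (0 : Eucl n) s, GenHarm w x)
    (hM : ∀ x ∈ sphere (0 : Eucl n) s, w x ≤ M) : ∀ x ∈ closedBall (0 : Eucl n) s, w x ≤ M := by
  intro x1 hx1
  by_contra! hlt
  have hs : 0 ≤ s := le_trans (norm_nonneg x1) (by simpa using hx1)
  set κ := (w x1 - M) / (2 * (s ^ 2 + 1)) with hκ
  have hκ0 : 0 < κ := by rw [hκ]; apply div_pos <;> nlinarith
  have hκs : κ * s ^ 2 < w x1 - M := by
    rw [hκ, div_mul_eq_mul_div, div_lt_iff₀ (by positivity)]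
    nlinarith [sq_nonneg s]
  obtain ⟨x0, hx0, hmax⟩ := (isCompact_closedBall (0 : Eucl n) s).exists_isMaxOn ⟨x1, hx1⟩
    (f := fun x => w x + κ * ‖x‖ ^ 2) (hc.add (by fun_prop))
  -- `κ` is small enough to keep the maximum point off the sphere
  have hx0s : x0 ∈ ball (0 : Eucl n) s := by
    rw [mem_ball_zero_iff]
    rw [mem_closedBall_zero_iff] at hx0
    refine lt_of_le_of_ne hx0 fun heq => ?_
    have h1 : w x1 + κ * ‖x1‖ ^ 2 ≤ w x0 + κ * ‖x0‖ ^ 2 := hmax hx1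
    have h2 := hM x0 (by simpa using heq)
    rw [heq] at h1
    nlinarith [mul_nonneg hκ0.le (sq_nonneg ‖x1‖)]
  -- maximality of the perturbation bounds each second difference of `w` by `-2κt²`
  have hev : ∀ᶠ t : ℝ in 𝓝[>] 0, discLap w x0 t / t ^ 2 ≤ -(2 * κ) := by
    have hx0' : ‖x0‖ < s := by simpa using hx0s
    filter_upwards [Ioo_mem_nhdsGT (show (0 : ℝ) < s - ‖x0‖ by linarith)] with t ht
    rw [div_le_iff₀ (pow_pos ht.1 2), discLap]
    have hterm : ∀ i : Fin n, w (x0 + t • basisV n i) + w (x0 - t • basisV n i) - 2 * w x0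
        ≤ -(2 * κ) * t ^ 2 := by
      intro i
      have hn1 : ‖t • basisV n i‖ = t := by
        rw [norm_smul, norm_basisV, mul_one, Real.norm_of_nonneg ht.1.le]
      have a1 : x0 + t • basisV n i ∈ closedBall (0 : Eucl n) s := by
        rw [mem_closedBall_zero_iff]
        have := norm_add_le x0 (t • basisV n i)
        linarith [ht.2]
      have a2 : x0 - t • basisV n i ∈ closedBall (0 : Eucl n) s := by
        rw [mem_closedBall_zero_iff]
        have := norm_sub_le x0 (t • basisV n i)
        linarith [ht.2]
      have m1 : w (x0 + t • basisV n i) + κ * ‖x0 + t • basisV n i‖ ^ 2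
        ≤ w x0 + κ * ‖x0‖ ^ 2 := hmax a1
      have m2 : w (x0 - t • basisV n i) + κ * ‖x0 - t • basisV n i‖ ^ 2
        ≤ w x0 + κ * ‖x0‖ ^ 2 := hmax a2
      have par := parallelogram_law_with_norm ℝ x0 (t • basisV n i)
      rw [hn1] at par
      have : κ * (‖x0 + t • basisV n i‖ ^ 2 + ‖x0 - t • basisV n i‖ ^ 2)
          = κ * (2 * (‖x0‖ ^ 2 + t ^ 2)) := by rw [par]
      linarith
    refine (Finset.sum_le_sum fun i _ => hterm i).trans ?_
    rw [Finset.sum_const, Finset.card_univ, Fintype.card_fin, nsmul_eq_mul]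
    have : (1 : ℝ) ≤ n := by exact_mod_cast hn
    nlinarith [mul_pos hκ0 (pow_pos ht.1 2)]
  have := le_of_tendsto (hg x0 hx0s) hev
  linarith

/-! ### Invariance of harmonicity: affine maps and the Kelvin transform -/

/-- Second directional derivatives may be computed along lines. -/
lemma snd_fderiv_eq {V F : Type*} [NormedAddCommGroup V] [NormedSpace ℝ V]
    [NormedAddCommGroup F] [NormedSpace ℝ F] {w : V → F} {x e : V} {k' : ℝ → F} {c : F}
    (h : ContDiffAt ℝ 2 w x) (h1 : ∀ᶠ s in 𝓝 (0 : ℝ), HasDerivAt (fun t : ℝ => w (x + t • e)) (k' s) s)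
    (h2 : HasDerivAt k' c 0) : fderiv ℝ (fderiv ℝ w) x e e = c := by
  have hcd : ∀ᶠ y in 𝓝 x, ContDiffAt ℝ 2 w y := h.eventually (by simp)
  have hline : Tendsto (fun s : ℝ => x + s • e) (𝓝 0) (𝓝 x) := by
    have : Continuous fun s : ℝ => x + s • e := by fun_prop
    simpa using this.tendsto 0
  have hd : DifferentiableAt ℝ (fderiv ℝ w) (x + (0 : ℝ) • e) := by
    simpa using (h.fderiv_right (m := 1) (by norm_num)).differentiableAt (by norm_num)
  have e1 : HasDerivAt (fun s : ℝ => fderiv ℝ w (x + s • e) e)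
      (fderiv ℝ (fderiv ℝ w) x e e) 0 := by
    simpa using (hasDerivAt_line hd).clm_apply (hasDerivAt_const (0 : ℝ) e)
  refine e1.unique (h2.congr_of_eventuallyEq ?_)
  filter_upwards [h1, hline.eventually hcd] with s hs1 hs2
  exact (hasDerivAt_line (hs2.differentiableAt (by norm_num))).unique hs1

lemma snd_line {V F : Type*} [NormedAddCommGroup V] [NormedSpace ℝ V]
    [NormedAddCommGroup F] [NormedSpace ℝ F] {w : V → F} {x : V} (e : V) (h : ContDiffAt ℝ 2 w x) :
    (∀ᶠ s in 𝓝 (0 : ℝ), HasDerivAt (fun t : ℝ => w (x + t • e)) (fderiv ℝ w (x + s • e) e) s) ∧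
    HasDerivAt (fun s : ℝ => fderiv ℝ w (x + s • e) e) (fderiv ℝ (fderiv ℝ w) x e e) 0 := by
  have hcd : ∀ᶠ y in 𝓝 x, ContDiffAt ℝ 2 w y := h.eventually (by simp)
  have hline : Tendsto (fun s : ℝ => x + s • e) (𝓝 0) (𝓝 x) := by
    have : Continuous fun s : ℝ => x + s • e := by fun_prop
    simpa using this.tendsto 0
  have hd : DifferentiableAt ℝ (fderiv ℝ w) (x + (0 : ℝ) • e) := by
    simpa using (h.fderiv_right (m := 1) (by norm_num)).differentiableAt (by norm_num)
  refine ⟨?_, by simpa using (hasDerivAt_line hd).clm_apply (hasDerivAt_const (0 : ℝ) e)⟩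
  filter_upwards [hline.eventually hcd] with s hs2
  exact hasDerivAt_line (hs2.differentiableAt (by norm_num))

lemma lap_congr {n : ℕ} {F : Type*} [NormedAddCommGroup F] [NormedSpace ℝ F]
    {f g : Eucl n → F} {x : Eucl n} (h : f =ᶠ[𝓝 x] g) : lap f x = lap g x := by
  have h2 : fderiv ℝ (fderiv ℝ f) x = fderiv ℝ (fderiv ℝ g) x :=
    (Filter.EventuallyEq.fderiv h).fderiv_eq
  rw [lap_eq, lap_eq, h2]

lemma lap_clm_comp {n : ℕ} {F G : Type*} [NormedAddCommGroup F] [NormedSpace ℝ F]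
    [NormedAddCommGroup G] [NormedSpace ℝ G] (L : F →L[ℝ] G)
    {f : Eucl n → F} {x : Eucl n} (h : ContDiffAt ℝ 2 f x) :
    lap (fun y => L (f y)) x = L (lap f x) := by
  rw [lap_eq, lap_eq, map_sum]
  refine Finset.sum_congr rfl fun i _ => ?_
  obtain ⟨h1, h2⟩ := snd_line (basisV n i) h
  refine snd_fderiv_eq (L.contDiff.contDiffAt.comp x h)
    (h1.mono fun s hs => L.hasFDerivAt.comp_hasDerivAt s hs) (L.hasFDerivAt.comp_hasDerivAt 0 h2)

lemma sum_basis_map {n : ℕ} {F : Type*} [NormedAddCommGroup F] [NormedSpace ℝ F]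
    (f : Eucl n → F) (x : Eucl n) (A : Eucl n ≃ₗᵢ[ℝ] Eucl n) :
    ∑ i, fderiv ℝ (fderiv ℝ f) x (A (basisV n i)) (A (basisV n i)) = lap f x := by
  have h1 := congrFun (InnerProductSpace.laplacian_eq_iteratedFDeriv_orthonormalBasis f
    (EuclideanSpace.basisFun (Fin n) ℝ)) x
  have h2 := congrFun (InnerProductSpace.laplacian_eq_iteratedFDeriv_orthonormalBasis f
    ((EuclideanSpace.basisFun (Fin n) ℝ).map A)) x
  rw [h1] at h2
  simp only [OrthonormalBasis.map_apply, EuclideanSpace.basisFun_apply, iteratedFDeriv_two_apply,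
    Matrix.cons_val_zero, Matrix.cons_val_one] at h2
  rw [lap_eq]
  exact h2.symm

/-- A similarity `x ↦ b + l A x` multiplies the Laplacian by `l ^ 2`; in particular harmonicity is
preserved. -/
lemma lap_affine {n : ℕ} {F : Type*} [NormedAddCommGroup F] [NormedSpace ℝ F]
    (f : Eucl n → F) (b x : Eucl n) (l : ℝ) (A : Eucl n ≃ₗᵢ[ℝ] Eucl n)
    (h : ContDiffAt ℝ 2 f (b + l • A x)) :
    ContDiffAt ℝ 2 (fun y => f (b + l • A y)) x ∧
    lap (fun y => f (b + l • A y)) x = l ^ 2 • lap f (b + l • A x) := by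
  have hA : ContDiff ℝ 2 (fun y => b + l • A y) :=
    contDiff_const.add (A.contDiff.const_smul l)
  have hc : ContDiffAt ℝ 2 (fun y => f (b + l • A y)) x := h.comp x hA.contDiffAt
  refine ⟨hc, ?_⟩
  rw [lap_eq, ← sum_basis_map f _ A, Finset.smul_sum]
  refine Finset.sum_congr rfl fun i _ => ?_
  obtain ⟨h1, h2⟩ := snd_line (l • A (basisV n i)) h
  have := snd_fderiv_eq (e := basisV n i) hc (h1.mono fun s hs => by
    convert hs using 3 with t
    rw [map_add, map_smul, smul_add, smul_comm l t, add_assoc]) h2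
  rw [this]
  simp [smul_smul, sq]

/-- Inversion in the unit sphere. It takes the junk value `0` at `0`. -/
noncomputable def invn {n : ℕ} (y : Eucl n) : Eucl n := (‖y‖ ^ 2)⁻¹ • y

lemma contDiffAt_invn {n : ℕ} {y : Eucl n} (hy : y ≠ 0) : ContDiffAt ℝ 2 (invn (n := n)) y := by
  unfold invn
  exact ((contDiff_norm_sq ℝ).contDiffAt.inv (by simpa using hy)).smul contDiffAt_id

/-- The weight `|y|^(2-n)` of the Kelvin transform. -/
noncomputable def kelvinWt (n : ℕ) (y : Eucl n) : ℝ := (‖y‖ ^ 2) ^ ((2 - (n : ℝ)) / 2)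

lemma contDiffAt_kelvinWt {n : ℕ} {y : Eucl n} (hy : y ≠ 0) : ContDiffAt ℝ 2 (kelvinWt n) y := by
  unfold kelvinWt
  exact (contDiff_norm_sq ℝ).contDiffAt.rpow_const_of_ne (by simpa using hy)

lemma sum_inner_basisV_smul {n : ℕ} (y : Eucl n) :
    ∑ i, ⟪y, basisV n i⟫_ℝ • basisV n i = y := by
  have := (EuclideanSpace.basisFun (Fin n) ℝ).sum_repr' y
  simp only [EuclideanSpace.basisFun_apply] at this
  simpa only [basisV, real_inner_comm] using this

lemma sum_inner_basisV_sq {n : ℕ} (y : Eucl n) : ∑ i, ⟪y, basisV n i⟫_ℝ ^ 2 = ‖y‖ ^ 2 := by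
  have h := congrArg (fun z => ⟪y, z⟫_ℝ) (sum_inner_basisV_smul y)
  simp only [inner_sum, inner_smul_right, real_inner_self_eq_norm_sq] at h
  rw [← h]
  exact Finset.sum_congr rfl fun i _ => sq _

/-- The second derivative of the Kelvin transform `|y|^(2-n) g(y/|y|²)` in a unit direction `e`. -/
lemma kelvin_snd {n : ℕ} {F : Type*} [NormedAddCommGroup F] [NormedSpace ℝ F]
    (g : Eucl n → F) {y e : Eucl n} (he : ‖e‖ = 1) (hy : y ≠ 0) (h : ContDiffAt ℝ 2 g (invn y))
    (m q α R : ℝ) (hm : m = (2 - (n : ℝ)) / 2) (hq : q = ‖y‖ ^ 2) (hα : α = ⟪y, e⟫_ℝ)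
    (hR : R = q ^ (m - 3)) (D : Eucl n →L[ℝ] F) (hD : D = fderiv ℝ g (invn y))
    (DD : Eucl n →L[ℝ] Eucl n →L[ℝ] F) (hDD : DD = fderiv ℝ (fderiv ℝ g) (invn y)) :
    fderiv ℝ (fderiv ℝ (fun z => kelvinWt n z • g (invn z))) y e e =
      (2 * m * R * q ^ 2 + 4 * m * (m - 1) * α ^ 2 * R * q) • g (invn y)
      + (2 * (2 * m - 2) * α * R * q) • D e
      - (4 * m * α ^ 2 * R + 2 * R * q + 4 * (m - 2) * α ^ 2 * R) • D y
      + (R * q) • DD e e - (2 * α * R) • DD y e - (2 * α * R) • DD e y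
      + (4 * α ^ 2 * R * q⁻¹) • DD y y := by
  have hq0 : 0 < q := by rw [hq]; positivity
  have hK : ContDiffAt ℝ 2 (fun z => kelvinWt n z • g (invn z)) y :=
    (contDiffAt_kelvinWt hy).smul (h.comp y (contDiffAt_invn hy))
  set Q : ℝ → ℝ := fun s => ‖y + s • e‖ ^ 2 with hQ
  set a : ℝ → ℝ := fun s => ⟪y + s • e, e⟫_ℝ with ha
  have hline : ∀ s, HasDerivAt (fun s : ℝ => y + s • e) e s := fun s => by
    simpa using ((hasDerivAt_id s).smul_const e).const_add y
  have hQ' : ∀ s, HasDerivAt Q (2 * a s) s := fun s => by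
    simpa using (hline s).norm_sq
  have ha' : ∀ s, HasDerivAt a 1 s := fun s => by
    have := (hline s).inner ℝ (hasDerivAt_const s e)
    simpa [real_inner_self_eq_norm_sq, he] using this
  have hQc : ContinuousAt Q 0 := (hQ' 0).continuousAt
  have hQ0 : Q 0 = q := by simp [hQ, hq]
  have ha0 : a 0 = α := by simp [ha, hα]
  have hpos : ∀ᶠ s in 𝓝 (0 : ℝ), 0 < Q s := hQc.eventually (lt_mem_nhds (by rw [hQ0]; exact hq0))
  -- the curve `s ↦ invn (y + s e)` and its velocity
  have hI : ∀ s, 0 < Q s → HasDerivAt (fun s : ℝ => invn (y + s • e))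
      ((Q s)⁻¹ • e - (2 * a s * (Q s ^ 2)⁻¹) • (y + s • e)) s := by
    intro s hs
    have := ((hQ' s).inv hs.ne').smul (hline s)
    refine this.congr_deriv ?_
    simp only [Pi.inv_apply]
    module
  have hIc : Tendsto (fun s : ℝ => invn (y + s • e)) (𝓝 0) (𝓝 (invn y)) := by
    have := (hI 0 (by rw [hQ0]; exact hq0)).continuousAt.tendsto
    simpa using this
  have hcd : ∀ᶠ z in 𝓝 (invn y), ContDiffAt ℝ 2 g z := h.eventually (by simp)
  have hW : ∀ s, 0 < Q s → ∀ r : ℝ, HasDerivAt (fun s => Q s ^ r) (2 * a s * r * Q s ^ (r - 1)) s :=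
    fun s hs r => (hQ' s).rpow_const (Or.inl hs.ne')
  have hpow1 : ∀ x : ℝ, 0 < x → ∀ r : ℝ, x ^ (r - 1) = x ^ r * x⁻¹ := fun x hx r => by
    rw [Real.rpow_sub hx, Real.rpow_one, div_eq_mul_inv]
  refine snd_fderiv_eq (k' := fun s => (2 * m * a s * Q s ^ (m - 1)) • g (invn (y + s • e))
      + (Q s ^ (m - 1)) • fderiv ℝ g (invn (y + s • e)) e
      - (2 * a s * Q s ^ (m - 2)) • fderiv ℝ g (invn (y + s • e)) (y + s • e)) hK ?_ ?_
  · filter_upwards [hpos, hIc.eventually hcd] with s hs hsd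
    have d1 := (hsd.differentiableAt (by norm_num)).hasFDerivAt.comp_hasDerivAt s (hI s hs)
    have d2 := (hW s hs m).smul d1
    have : (fun t : ℝ => kelvinWt n (y + t • e) • g (invn (y + t • e)))
        = fun t => Q t ^ m • g (invn (y + t • e)) := by
      funext t; simp only [kelvinWt, hQ, hm]
    rw [this]
    refine d2.congr_deriv ?_
    have e1 : Q s ^ (m - 1) = Q s ^ m * (Q s)⁻¹ := hpow1 _ hs m
    have e2 : Q s ^ (m - 2) = Q s ^ m * (Q s ^ 2)⁻¹ := by
      rw [show m - 2 = m - 1 - 1 by ring, hpow1 _ hs, e1]; field_simp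
    simp only [map_sub, map_smul, Function.comp_apply]
    rw [e1, e2]
    module
  · have hs : 0 < Q 0 := by rw [hQ0]; exact hq0
    have hd : DifferentiableAt ℝ g (invn (y + (0 : ℝ) • e)) := by
      simpa using h.differentiableAt (by norm_num)
    have hdd : DifferentiableAt ℝ (fderiv ℝ g) (invn (y + (0 : ℝ) • e)) := by
      simpa using (h.fderiv_right (m := 1) (by norm_num)).differentiableAt (by norm_num)
    have g1 := hd.hasFDerivAt.comp_hasDerivAt 0 (hI 0 hs)
    have g2 := hdd.hasFDerivAt.comp_hasDerivAt 0 (hI 0 hs)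
    have t1 := (((ha' 0).const_mul (2 * m)).mul (hW 0 hs (m - 1))).smul g1
    have t2 := (hW 0 hs (m - 1)).smul (g2.clm_apply (hasDerivAt_const (0 : ℝ) e))
    have t3 := (((ha' 0).const_mul 2).mul (hW 0 hs (m - 2))).smul (g2.clm_apply (hline 0))
    refine ((t1.add t2).sub t3).congr_deriv ?_
    have r2 : q ^ (m - 2) = R * q := by
      rw [hR, show m - 3 = m - 2 - 1 by ring, hpow1 _ hq0]; field_simp
    have r1 : q ^ (m - 1) = R * q ^ 2 := by
      rw [show q ^ (m - 1) = q ^ (m - 2) * q by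
        rw [show m - 2 = m - 1 - 1 by ring, hpow1 _ hq0 (m - 1)]; field_simp, r2]; ring
    have x1 : m - 1 - 1 = m - 2 := by ring
    have x2 : m - 2 - 1 = m - 3 := by ring
    simp only [Function.comp_apply, zero_smul, add_zero, hQ0, ha0, x1, x2, r1, r2, ← hR, ← hD,
      ← hDD, map_sub, map_smul, map_zero, sub_apply,
      smul_apply, smul_sub, smul_add, smul_smul, mul_one, Pi.mul_apply]
    match_scalars <;> field_simp <;> ring

/-- The Kelvin transform preserves harmonicity. -/
lemma kelvin_harm {n : ℕ} {F : Type*} [NormedAddCommGroup F] [NormedSpace ℝ F]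
    (g : Eucl n → F) {y : Eucl n} (hy : y ≠ 0) (h : ContDiffAt ℝ 2 g (invn y))
    (h0 : lap g (invn y) = 0) : lap (fun z => kelvinWt n z • g (invn z)) y = 0 := by
  have hq0 : (‖y‖ ^ 2) ≠ 0 := by positivity
  set q := ‖y‖ ^ 2 with hq
  set m := (2 - (n : ℝ)) / 2 with hm
  set R := q ^ (m - 3) with hR
  set D := fderiv ℝ g (invn y) with hD
  set DD := fderiv ℝ (fderiv ℝ g) (invn y) with hDD
  have hs2 := sum_inner_basisV_sq y
  have hs1 := sum_inner_basisV_smul y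
  have s1 : ∑ i, ⟪y, basisV n i⟫_ℝ • D (basisV n i) = D y := by
    conv_rhs => rw [← hs1]
    simp
  have s2 : ∑ i, ⟪y, basisV n i⟫_ℝ • DD y (basisV n i) = DD y y := by
    conv_rhs => enter [2]; rw [← hs1]
    simp
  have s3 : ∑ i, ⟪y, basisV n i⟫_ℝ • DD (basisV n i) y = DD y y := by
    conv_rhs => enter [1, 2]; rw [← hs1]
    simp
  have s4 : ∑ i, DD (basisV n i) (basisV n i) = 0 := by rw [← h0, lap_eq]
  rw [lap_eq]
  rw [Finset.sum_congr rfl fun i _ => kelvin_snd g (norm_basisV i) hy h m q _ R hm hq rfl hR D hD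
    DD hDD]
  -- group the summand so that only the traces `s1`, ..., `s4` and `hs2` remain to be summed
  have split : ∀ i : Fin n,
      (2 * m * R * q ^ 2 + 4 * m * (m - 1) * ⟪y, basisV n i⟫_ℝ ^ 2 * R * q) • g (invn y)
      + (2 * (2 * m - 2) * ⟪y, basisV n i⟫_ℝ * R * q) • D (basisV n i)
      - (4 * m * ⟪y, basisV n i⟫_ℝ ^ 2 * R + 2 * R * q + 4 * (m - 2) * ⟪y, basisV n i⟫_ℝ ^ 2 * R) • D y
      + (R * q) • DD (basisV n i) (basisV n i) - (2 * ⟪y, basisV n i⟫_ℝ * R) • DD y (basisV n i)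
      - (2 * ⟪y, basisV n i⟫_ℝ * R) • DD (basisV n i) y
      + (4 * ⟪y, basisV n i⟫_ℝ ^ 2 * R * q⁻¹) • DD y y =
      ((2 * m * R * q ^ 2) • g (invn y) - (2 * R * q) • D y)
      + ⟪y, basisV n i⟫_ℝ ^ 2 • ((4 * m * (m - 1) * R * q) • g (invn y)
          - (4 * m * R + 4 * (m - 2) * R) • D y + (4 * R * q⁻¹) • DD y y)
      + (2 * (2 * m - 2) * R * q) • (⟪y, basisV n i⟫_ℝ • D (basisV n i))
      + (R * q) • DD (basisV n i) (basisV n i)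
      - (2 * R) • (⟪y, basisV n i⟫_ℝ • DD y (basisV n i))
      - (2 * R) • (⟪y, basisV n i⟫_ℝ • DD (basisV n i) y) := fun i => by module
  rw [Finset.sum_congr rfl fun i _ => split i]
  simp only [Finset.sum_add_distrib, Finset.sum_sub_distrib, ← Finset.smul_sum, ← Finset.sum_smul,
    s1, s2, s3, s4, hs2, Finset.sum_const, Finset.card_univ, Fintype.card_fin]
  have hn : (n : ℝ) = 2 - 2 * m := by rw [hm]; ring
  simp only [← Nat.cast_smul_eq_nsmul ℝ, hn, smul_zero, add_zero]
  match_scalars <;> field_simp <;> ring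

/-! ### The Poisson integral -/

lemma sub_ne_zero_of_ball {n : ℕ} {x ζ : Eucl n} (hx : ‖x‖ < 1) (hζ : ‖ζ‖ = 1) : x - ζ ≠ 0 := by
  intro h
  rw [sub_eq_zero] at h
  rw [h] at hx
  linarith

lemma kelvinWt_eq {n : ℕ} {y : Eucl n} (hy : y ≠ 0) : kelvinWt n y = ‖y‖ ^ 2 / ‖y‖ ^ n := by
  have h : 0 < ‖y‖ := norm_pos_iff.2 hy
  rw [kelvinWt, ← Real.rpow_natCast, ← Real.rpow_mul h.le,
    show ((2 : ℕ) : ℝ) * ((2 - (n : ℝ)) / 2) = (2 : ℕ) - (n : ℝ) by push_cast; ring,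
    Real.rpow_sub h, Real.rpow_natCast, Real.rpow_natCast]

/-- Up to a translation, the Poisson kernel is the Kelvin transform of an affine function. -/
lemma poissonK_eq_kelvin {n : ℕ} {x ζ : Eucl n} (hx : x - ζ ≠ 0) (hζ : ‖ζ‖ = 1) :
    poissonK n x ζ = kelvinWt n (x - ζ) • (-1 - 2 * ⟪invn (x - ζ), ζ⟫_ℝ) := by
  have h : 0 < ‖x - ζ‖ := norm_pos_iff.2 hx
  rw [kelvinWt_eq hx, poissonK, invn, inner_smul_left]
  have e : ‖x‖ ^ 2 = ‖x - ζ‖ ^ 2 + 2 * ⟪x - ζ, ζ⟫_ℝ + 1 := by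
    have := norm_add_sq_real (x - ζ) ζ
    rw [sub_add_cancel, hζ] at this
    linarith
  rw [e]
  simp only [map_inv₀, map_pow, conj_trivial, smul_eq_mul]
  field_simp
  ring

lemma contDiffAt_poissonK {n : ℕ} {x ζ : Eucl n} (h : x - ζ ≠ 0) :
    ContDiffAt ℝ 2 (fun z : Eucl n × Eucl n => poissonK n z.1 z.2) (x, ζ) := by
  unfold poissonK
  refine ContDiffAt.div ?_ ?_ ?_
  · exact contDiffAt_const.sub (contDiffAt_fst.norm_sq ℝ)
  · exact ((contDiffAt_fst.sub contDiffAt_snd).norm ℝ h).pow n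
  · exact pow_ne_zero _ (norm_ne_zero_iff.2 h)

lemma contDiffAt_poissonK_left {n : ℕ} {x ζ : Eucl n} (h : x - ζ ≠ 0) :
    ContDiffAt ℝ 2 (fun x => poissonK n x ζ) x :=
  (contDiffAt_poissonK h).comp x (contDiffAt_id.prodMk contDiffAt_const)

lemma lap_poissonK {n : ℕ} {x ζ : Eucl n} (h : x - ζ ≠ 0) (hζ : ‖ζ‖ = 1) :
    lap (fun x => poissonK n x ζ) x = 0 := by
  have hev : ∀ᶠ y in 𝓝 x, y - ζ ≠ 0 := (continuousAt_id.sub continuousAt_const).eventually_ne h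
  rw [lap_congr (hev.mono fun y hy => poissonK_eq_kelvin hy hζ)]
  set g : Eucl n → ℝ := fun z => -1 - 2 * ⟪z, ζ⟫_ℝ with hg
  have hgc : ContDiff ℝ 2 g :=
    contDiff_const.sub (contDiff_const.mul (contDiff_id.inner ℝ contDiff_const))
  have hlap : lap g (invn (x - ζ)) = 0 := by
    rw [lap_eq]
    refine Finset.sum_eq_zero fun i _ => ?_
    refine snd_fderiv_eq (k' := fun _ => -(2 * ⟪basisV n i, ζ⟫_ℝ)) hgc.contDiffAt
      (Eventually.of_forall fun s => ?_) (hasDerivAt_const _ _)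
    have : (fun t : ℝ => g (invn (x - ζ) + t • basisV n i))
        = fun t => g (invn (x - ζ)) - t * (2 * ⟪basisV n i, ζ⟫_ℝ) := by
      funext t
      simp only [hg, inner_add_left, inner_smul_left, conj_trivial]; ring
    rw [this]
    simpa using ((hasDerivAt_id s).mul_const (2 * ⟪basisV n i, ζ⟫_ℝ)).const_sub (g (invn (x - ζ)))
  have hk := kelvin_harm g h hgc.contDiffAt hlap
  have hkc : ContDiffAt ℝ 2 (fun z => kelvinWt n z • g (invn z)) (x - ζ) :=
    (contDiffAt_kelvinWt h).smul (hgc.contDiffAt.comp _ (contDiffAt_invn h))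
  have e : (fun y => -ζ + (1 : ℝ) • LinearIsometryEquiv.refl ℝ (Eucl n) y) = fun y => y - ζ := by
    funext y; simp [sub_eq_neg_add]
  have := (lap_affine (fun z => kelvinWt n z • g (invn z)) (-ζ) x 1
    (LinearIsometryEquiv.refl ℝ (Eucl n)) (by rw [congrFun e x]; exact hkc)).2
  rw [congrFun e x, hk, smul_zero] at this
  have e2 : ∀ y, -ζ + (1 : ℝ) • LinearIsometryEquiv.refl ℝ (Eucl n) y = y - ζ := congrFun e
  simpa only [e2] using this

lemma poissonK_nonneg {n : ℕ} {x : Eucl n} (ζ : Eucl n) (hx : ‖x‖ ≤ 1) : 0 ≤ poissonK n x ζ := by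
  unfold poissonK
  have := norm_nonneg x
  exact div_nonneg (by nlinarith) (by positivity)

/-- Harnack's bound for the Poisson kernel. -/
lemma poissonK_le {n : ℕ} {x ζ : Eucl n} (hx : ‖x‖ < 1) (hζ : ‖ζ‖ = 1) :
    poissonK n x ζ ≤ (1 + ‖x‖) * (1 - ‖x‖) ^ (1 - (n : ℝ)) := by
  have h0 : 0 < 1 - ‖x‖ := by linarith
  have h1 : 1 - ‖x‖ ≤ ‖x - ζ‖ := by
    have := norm_sub_norm_le ζ x
    rw [norm_sub_rev, hζ] at this
    exact this
  have h2 := norm_nonneg x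
  rw [Real.rpow_sub h0, Real.rpow_one, Real.rpow_natCast, poissonK, ← mul_div_assoc]
  have : (1 + ‖x‖) * (1 - ‖x‖) = 1 - ‖x‖ ^ 2 := by ring
  rw [this]
  have : 0 ≤ 1 - ‖x‖ ^ 2 := by nlinarith
  gcongr

/-- A rotation-invariant probability measure on `ℝⁿ` carried by the unit sphere. -/
structure SphProb (n : ℕ) (σ : Measure (Eucl n)) : Prop where
  prob : IsProbabilityMeasure σ
  supp : ∀ᵐ ζ ∂σ, ζ ∈ sphere (0 : Eucl n) 1
  inv : ∀ A : Eucl n ≃ₗᵢ[ℝ] Eucl n, MeasurePreserving A σ σ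

lemma SphProb.integrable {n : ℕ} {σ : Measure (Eucl n)} (h : SphProb n σ) {F : Type*}
    [NormedAddCommGroup F] {g : Eucl n → F} (hg : ContinuousOn g (sphere 0 1)) :
    Integrable g σ := by
  have := h.prob
  have h1 : IntegrableOn g (sphere 0 1) σ := hg.integrableOn_compact (isCompact_sphere 0 1)
  rwa [IntegrableOn, Measure.restrict_eq_self_of_ae_mem h.supp] at h1

lemma continuousOn_poissonK_right {n : ℕ} {x : Eucl n} (hx : ‖x‖ < 1) :
    ContinuousOn (fun ζ => poissonK n x ζ) (sphere 0 1) := fun ζ hζ =>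
  (ContinuousAt.comp (f := fun ζ => (x, ζ)) (g := fun z : Eucl n × Eucl n => poissonK n z.1 z.2)
    (contDiffAt_poissonK (sub_ne_zero_of_ball hx (by simpa using hζ))).continuousAt
    (by fun_prop)).continuousWithinAt

/-- Second differences of the Poisson kernel are `O(t²)` uniformly in the boundary point. -/
lemma poissonK_second_diff {n : ℕ} {x : Eucl n} (hx : ‖x‖ < 1) :
    ∃ T > 0, ∃ C, ‖x‖ + T < 1 ∧ ∀ ζ ∈ sphere (0 : Eucl n) 1, ∀ i, ∀ t, 0 ≤ t → t ≤ T →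
      |poissonK n (x + t • basisV n i) ζ + poissonK n (x - t • basisV n i) ζ
        - 2 * poissonK n x ζ| ≤ C * t ^ 2 := by
  set T := (1 - ‖x‖) / 2 with hT
  have hT0 : 0 < T := by rw [hT]; linarith
  set K : Eucl n × Eucl n → ℝ := fun z => poissonK n z.1 z.2
  have hK : ∀ z ∈ closedBall x T ×ˢ sphere (0 : Eucl n) 1, ContDiffAt ℝ 2 K z := by
    rintro ⟨y, ζ⟩ ⟨hy, hζ⟩
    refine contDiffAt_poissonK (sub_ne_zero_of_ball ?_ (by simpa using hζ))
    have := norm_le_norm_add_norm_sub' y x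
    rw [mem_closedBall, dist_eq_norm] at hy
    dsimp only at hy
    linarith
  obtain ⟨C, hC⟩ := ((isCompact_closedBall x T).prod (isCompact_sphere (0 : Eucl n) 1)).exists_bound_of_continuousOn
    (f := fun z => fderiv ℝ (fderiv ℝ K) z) fun z hz =>
      (((hK z hz).fderiv_right (m := 1) (by norm_num)).fderiv_right (m := 0)
        (by norm_num)).continuousAt.continuousWithinAt
  refine ⟨T, hT0, 2 * C, by linarith, fun ζ hζ i t ht htT => ?_⟩
  have hmem : ∀ s : ℝ, |s| ≤ T → (x, ζ) + s • (basisV n i, (0 : Eucl n))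
      ∈ closedBall x T ×ˢ sphere (0 : Eucl n) 1 := by
    intro s hs
    refine ⟨?_, by simpa using hζ⟩
    simpa [dist_eq_norm, norm_smul, norm_basisV] using hs
  have := second_diff K (x, ζ) (basisV n i, 0) T C 0 (fun s hs => hK _ (hmem s hs))
    (fun s hs => by
      have h1 := hC _ (hmem s hs)
      have h2 := (fderiv ℝ (fderiv ℝ K) ((x, ζ) + s • (basisV n i, 0))).le_opNorm₂
        (basisV n i, 0) (basisV n i, 0)
      have h3 : ‖(basisV n i, (0 : Eucl n))‖ = 1 := by simp [Prod.norm_def, norm_basisV]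
      rw [h3, mul_one, mul_one] at h2
      rw [sub_zero, ← Real.norm_eq_abs]
      exact h2.trans h1) t ht htT
  simpa [K] using this

/-- The Poisson integral of `g`. -/
noncomputable def poissonInt {n : ℕ} (σ : Measure (Eucl n)) (g : Eucl n → ℝ) (x : Eucl n) : ℝ :=
  ∫ ζ, poissonK n x ζ * g ζ ∂σ

/-- The Poisson integral is generalized harmonic, by dominated convergence from the harmonicity of
the kernel. -/
lemma SphProb.genHarm_poissonInt {n : ℕ} {σ : Measure (Eucl n)} (h : SphProb n σ) {g : Eucl n → ℝ}
    (hg : ContinuousOn g (sphere 0 1)) {x : Eucl n} (hx : ‖x‖ < 1) :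
    GenHarm (poissonInt σ g) x := by
  have := h.prob
  obtain ⟨T, hT, C, hTx, hC⟩ := poissonK_second_diff hx
  obtain ⟨M, hM⟩ := (isCompact_sphere (0 : Eucl n) 1).exists_bound_of_continuousOn hg
  have hball : ∀ t, 0 ≤ t → t ≤ T → ∀ i, ‖x + t • basisV n i‖ < 1 ∧ ‖x - t • basisV n i‖ < 1 := by
    intro t h0 h1 i
    have hn1 : ‖t • basisV n i‖ = t := by
      rw [norm_smul, norm_basisV, mul_one, Real.norm_of_nonneg h0]
    have := norm_add_le x (t • basisV n i)
    have := norm_sub_le x (t • basisV n i)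
    constructor <;> linarith
  have hint : ∀ y : Eucl n, ‖y‖ < 1 → Integrable (fun ζ => poissonK n y ζ * g ζ) σ := fun y hy =>
    h.integrable ((continuousOn_poissonK_right hy).mul hg)
  have hmem : ∀ᶠ t : ℝ in 𝓝[>] 0, t ∈ Ioo 0 T := Ioo_mem_nhdsGT hT
  have hterm : ∀ t ∈ Ioo 0 T, ∀ i, Integrable (fun ζ => (poissonK n (x + t • basisV n i) ζ
      + poissonK n (x - t • basisV n i) ζ - 2 * poissonK n x ζ) * g ζ) σ := by
    intro t ht i
    obtain ⟨b1, b2⟩ := hball t ht.1.le ht.2.le i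
    refine (((hint _ b1).add (hint _ b2)).sub ((hint x hx).const_mul 2)).congr ?_
    exact Eventually.of_forall fun ζ => by simp only [Pi.add_apply, Pi.sub_apply]; ring
  have heq : ∀ t ∈ Ioo 0 T, ∫ ζ, discLap (fun y => poissonK n y ζ) x t / t ^ 2 * g ζ ∂σ
      = discLap (poissonInt σ g) x t / t ^ 2 := by
    intro t ht
    have : ∀ ζ, discLap (fun y => poissonK n y ζ) x t / t ^ 2 * g ζ
        = (∑ i, (poissonK n (x + t • basisV n i) ζ
      + poissonK n (x - t • basisV n i) ζ - 2 * poissonK n x ζ) * g ζ) / t ^ 2 := by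
      intro ζ
      rw [discLap, div_mul_eq_mul_div, Finset.sum_mul]
    simp only [this]
    rw [integral_div, integral_finsetSum _ fun i _ => hterm t ht i, discLap]
    congr 1
    refine Finset.sum_congr rfl fun i _ => ?_
    obtain ⟨b1, b2⟩ := hball t ht.1.le ht.2.le i
    simp only [poissonInt]
    have hadd : Integrable (fun ζ => poissonK n (x + t • basisV n i) ζ * g ζ
        + poissonK n (x - t • basisV n i) ζ * g ζ) σ := (hint _ b1).add (hint _ b2)
    rw [← integral_const_mul, ← integral_add (hint _ b1) (hint _ b2),
      ← integral_sub hadd ((hint x hx).const_mul 2)]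
    refine integral_congr_ae (Eventually.of_forall fun ζ => ?_)
    simp only []
    ring
  -- `poissonK_second_diff` supplies the dominating constant
  have hlim : Tendsto (fun t => ∫ ζ, discLap (fun y => poissonK n y ζ) x t / t ^ 2 * g ζ ∂σ)
      (𝓝[>] 0) (𝓝 (∫ _, (0 : ℝ) ∂σ)) := by
    refine tendsto_integral_filter_of_dominated_convergence (fun _ => n * C * M) ?_ ?_ ?_ ?_
    · filter_upwards [hmem] with t ht
      have : Integrable (fun ζ => (∑ i, (poissonK n (x + t • basisV n i) ζ
        + poissonK n (x - t • basisV n i) ζ - 2 * poissonK n x ζ) * g ζ) / t ^ 2) σ :=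
        (integrable_finsetSum _ fun i _ => hterm t ht i).div_const _
      refine this.aestronglyMeasurable.congr (Eventually.of_forall fun ζ => ?_)
      simp only [discLap, div_mul_eq_mul_div, Finset.sum_mul]
    · filter_upwards [hmem] with t ht
      filter_upwards [h.supp] with ζ hζ
      have ht2 : 0 < t ^ 2 := pow_pos ht.1 2
      have : |discLap (fun y => poissonK n y ζ) x t| ≤ n * (C * t ^ 2) := by
        refine (Finset.abs_sum_le_sum_abs _ _).trans ?_
        refine (Finset.sum_le_sum fun i _ => hC ζ hζ i t ht.1.le ht.2.le).trans ?_
        simp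
      have h2 : |discLap (fun y => poissonK n y ζ) x t / t ^ 2| ≤ n * C := by
        rw [abs_div, abs_of_pos ht2, div_le_iff₀ ht2]
        linarith
      rw [norm_mul, Real.norm_eq_abs]
      exact mul_le_mul h2 (hM ζ hζ) (norm_nonneg _) ((abs_nonneg _).trans h2)
    · exact integrable_const _
    · filter_upwards [h.supp] with ζ hζ
      have hζ' : ‖ζ‖ = 1 := by simpa using hζ
      have hne := sub_ne_zero_of_ball hx hζ'
      have := genHarm_of_lap (contDiffAt_poissonK_left hne) (lap_poissonK hne hζ')
      have := Tendsto.mul_const (g ζ) this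
      rwa [zero_mul] at this
  rw [integral_zero] at hlim
  exact hlim.congr' (hmem.mono heq)

lemma SphProb.continuousOn_poissonInt {n : ℕ} {σ : Measure (Eucl n)} (h : SphProb n σ)
    {g : Eucl n → ℝ} (hg : ContinuousOn g (sphere 0 1)) :
    ContinuousOn (poissonInt σ g) (ball 0 1) := by
  have := h.prob
  intro x hx
  rw [mem_ball_zero_iff] at hx
  obtain ⟨M, hM⟩ := (isCompact_sphere (0 : Eucl n) 1).exists_bound_of_continuousOn hg
  set B : Eucl n → ℝ := fun x => (1 + ‖x‖) * (1 - ‖x‖) ^ (1 - (n : ℝ)) with hB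
  have hBc : ContinuousAt B x := by
    refine ContinuousAt.mul (by fun_prop) (ContinuousAt.rpow_const (by fun_prop) (Or.inl ?_))
    linarith
  have hev : ∀ᶠ y in 𝓝 x, ‖y‖ < 1 ∧ B y < B x + 1 :=
    (continuousAt_id.norm.eventually (gt_mem_nhds hx)).and
      (hBc.eventually (gt_mem_nhds (by linarith)))
  refine ContinuousAt.continuousWithinAt ?_
  refine continuousAt_of_dominated (bound := fun _ => (B x + 1) * M) ?_ ?_ (integrable_const _) ?_
  · filter_upwards [hev] with y hy
    exact (h.integrable ((continuousOn_poissonK_right hy.1).mul hg)).aestronglyMeasurable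
  · filter_upwards [hev] with y hy
    filter_upwards [h.supp] with ζ hζ
    rw [norm_mul, Real.norm_of_nonneg (poissonK_nonneg ζ hy.1.le)]
    have := (poissonK_le hy.1 (by simpa using hζ)).trans hy.2.le
    exact mul_le_mul this (hM ζ hζ) (norm_nonneg _) ((poissonK_nonneg ζ hy.1.le).trans this)
  · filter_upwards [h.supp] with ζ hζ
    exact (contDiffAt_poissonK_left
      (sub_ne_zero_of_ball hx (by simpa using hζ))).continuousAt.mul continuousAt_const

/-- The Poisson kernel has total mass `1`: its integral is a radial harmonic function, hence
constant on spheres, hence constant by the maximum principle. -/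
lemma SphProb.integral_poissonK {n : ℕ} (hn : 1 ≤ n) {σ : Measure (Eucl n)} (h : SphProb n σ)
    {x : Eucl n} (hx : ‖x‖ < 1) : ∫ ζ, poissonK n x ζ ∂σ = 1 := by
  have := h.prob
  set H := poissonInt σ (fun _ => (1 : ℝ)) with hH
  have hHx : ∀ y, H y = ∫ ζ, poissonK n y ζ ∂σ := fun y => by simp [hH, poissonInt]
  -- a reflection carries `x` to any other point of its sphere
  have hrad : ∀ y : Eucl n, ‖y‖ = ‖x‖ → H y = H x := by
    intro y hy
    set A : Eucl n ≃ₗᵢ[ℝ] Eucl n := (ℝ ∙ (x - y))ᗮ.reflection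
    have hA : A x = y := Submodule.reflection_sub hy.symm
    rw [hHx, hHx, ← (h.inv A).integral_comp A.toHomeomorph.measurableEmbedding]
    refine integral_congr_ae (Eventually.of_forall fun ζ => ?_)
    simp only [poissonK, ← hA, A.norm_map, ← map_sub]
  have h0 : H 0 = 1 := by
    rw [hHx]
    have : ∀ᵐ ζ ∂σ, poissonK n 0 ζ = 1 := by
      filter_upwards [h.supp] with ζ hζ
      have : ‖ζ‖ = 1 := by simpa using hζ
      simp [poissonK, this]
    rw [integral_congr_ae this]
    simp
  have hsub : closedBall (0 : Eucl n) ‖x‖ ⊆ ball 0 1 := closedBall_subset_ball hx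
  have hc : ContinuousOn H (closedBall 0 ‖x‖) :=
    (h.continuousOn_poissonInt continuousOn_const).mono hsub
  have hg : ∀ y ∈ ball (0 : Eucl n) ‖x‖, GenHarm H y := fun y hy =>
    h.genHarm_poissonInt continuousOn_const ((mem_ball_zero_iff.1 hy).trans hx)
  have h1 := max_principle (M := H x) hn hc hg
    (fun y hy => (hrad y (by simpa using hy)).le) 0 (by simp)
  have h2 := max_principle (M := 0) (w := fun y => H x - H y) hn (continuousOn_const.sub hc)
    (fun y hy => (genHarm_const _ _).sub (hg y hy))
    (fun y hy => by simp only [hrad y (by simpa using hy), sub_self, le_refl]) 0 (by simp)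
  rw [← hHx]
  linarith

/-- The Poisson integral of `u` attains its boundary values uniformly. -/
lemma SphProb.poissonInt_sub_le {n : ℕ} (hn : 1 ≤ n) {σ : Measure (Eucl n)} (h : SphProb n σ)
    {u : Eucl n → ℝ} (hu : ContinuousOn u (closedBall 0 1)) {ε : ℝ} (hε : 0 < ε) :
    ∀ᶠ s in 𝓝[<] (1 : ℝ), ∀ x : Eucl n, ‖x‖ = s → |poissonInt σ u x - u x| ≤ ε := by
  have := h.prob
  have huS : ContinuousOn u (sphere 0 1) := hu.mono sphere_subset_closedBall
  obtain ⟨M, hM⟩ := (isCompact_closedBall (0 : Eucl n) 1).exists_bound_of_continuousOn hu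
  have huc := (isCompact_closedBall (0 : Eucl n) 1).uniformContinuousOn_of_continuous hu
  obtain ⟨δ, hδ, hδu⟩ := Metric.uniformContinuousOn_iff.1 huc (ε / 2) (by positivity)
  have hM0 : 0 ≤ M := (norm_nonneg _).trans (hM 0 (by simp))
  have hlim : Tendsto (fun s : ℝ => 2 * M * ((1 - s ^ 2) / δ ^ n)) (𝓝[<] 1) (𝓝 0) := by
    have : Continuous fun s : ℝ => 2 * M * ((1 - s ^ 2) / δ ^ n) := by fun_prop
    have := this.tendsto 1
    simp only [one_pow, sub_self, zero_div, mul_zero] at this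
    exact this.mono_left nhdsWithin_le_nhds
  filter_upwards [hlim.eventually (gt_mem_nhds (half_pos hε)), Ioo_mem_nhdsLT zero_lt_one]
    with s hs hs1 x hxs
  have hx : ‖x‖ < 1 := hxs ▸ hs1.2
  have hPi : Integrable (fun ζ => poissonK n x ζ) σ := h.integrable (continuousOn_poissonK_right hx)
  have hPu : Integrable (fun ζ => poissonK n x ζ * u ζ) σ :=
    h.integrable ((continuousOn_poissonK_right hx).mul huS)
  have e : poissonInt σ u x - u x = ∫ ζ, poissonK n x ζ * (u ζ - u x) ∂σ := by
    simp only [mul_sub]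
    rw [integral_sub hPu (hPi.mul_const _), integral_mul_const, h.integral_poissonK hn hx, one_mul]
    rfl
  rw [e]
  -- near `x` the oscillation of `u` is small, away from `x` the kernel is
  have hb : ∀ᵐ ζ ∂σ, ‖poissonK n x ζ * (u ζ - u x)‖ ≤ poissonK n x ζ * (ε / 2) + ε / 2 := by
    filter_upwards [h.supp] with ζ hζ
    have hP := poissonK_nonneg (n := n) ζ hx.le
    have hζb : ζ ∈ closedBall (0 : Eucl n) 1 := sphere_subset_closedBall hζ
    have hxb : x ∈ closedBall (0 : Eucl n) 1 := by simpa using hx.le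
    rw [norm_mul, Real.norm_of_nonneg hP]
    by_cases hd : ‖x - ζ‖ < δ
    · have := hδu x hxb ζ hζb (by rwa [dist_eq_norm])
      rw [dist_comm, dist_eq_norm] at this
      have := mul_le_mul_of_nonneg_left this.le hP
      linarith
    · push Not at hd
      have h1 : poissonK n x ζ ≤ (1 - s ^ 2) / δ ^ n := by
        rw [poissonK, hxs]
        have : 0 ≤ 1 - s ^ 2 := by nlinarith [hs1.1, hs1.2]
        gcongr
      have h2 : ‖u ζ - u x‖ ≤ 2 * M := by
        have := norm_sub_le (u ζ) (u x)
        linarith [hM ζ hζb, hM x hxb]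
      have h3 := mul_le_mul h1 h2 (norm_nonneg _) (hP.trans h1)
      have : 0 ≤ poissonK n x ζ * (ε / 2) := by positivity
      linarith
  have := norm_integral_le_of_norm_le ((hPi.mul_const (ε / 2)).add (integrable_const (ε / 2))) hb
  rw [Real.norm_eq_abs] at this
  refine this.trans (le_of_eq ?_)
  have e2 : ∫ ζ, poissonK n x ζ * (ε / 2) + ε / 2 ∂σ = ε := by
    rw [integral_add (hPi.mul_const (ε / 2)) (integrable_const (ε / 2)), integral_mul_const,
      h.integral_poissonK hn hx]
    simp
  exact e2

/-- The Poisson formula: the difference of the two sides satisfies the maximum principle and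
tends to `0` at the sphere. -/
lemma SphProb.poisson_formula {n : ℕ} (hn : 1 ≤ n) {σ : Measure (Eucl n)} (h : SphProb n σ)
    {u : Eucl n → ℝ} (hu : ContinuousOn u (closedBall 0 1))
    (hg : ∀ x ∈ ball (0 : Eucl n) 1, GenHarm u x) {x : Eucl n} (hx : ‖x‖ < 1) :
    u x = ∫ ζ, poissonK n x ζ * u ζ ∂σ := by
  have huS : ContinuousOn u (sphere 0 1) := hu.mono sphere_subset_closedBall
  have key : ∀ ε > 0, |poissonInt σ u x - u x| ≤ ε := by
    intro ε hε
    obtain ⟨s, hs, hs1⟩ := ((h.poissonInt_sub_le hn hu hε).and (Ioo_mem_nhdsLT hx)).exists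
    have hsub : closedBall (0 : Eucl n) s ⊆ ball 0 1 := closedBall_subset_ball hs1.2
    have hc : ContinuousOn (poissonInt σ u) (closedBall 0 s) :=
      (h.continuousOn_poissonInt huS).mono hsub
    have hc' : ContinuousOn u (closedBall 0 s) := hu.mono (hsub.trans ball_subset_closedBall)
    have hGH : ∀ y ∈ ball (0 : Eucl n) s, GenHarm (poissonInt σ u) y := fun y hy =>
      h.genHarm_poissonInt huS ((mem_ball_zero_iff.1 hy).trans hs1.2)
    have hGu : ∀ y ∈ ball (0 : Eucl n) s, GenHarm u y := fun y hy =>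
      hg y (hsub (ball_subset_closedBall hy))
    have hxs : x ∈ closedBall (0 : Eucl n) s := by simpa using hs1.1.le
    have h1 := max_principle (M := ε) (w := fun y => poissonInt σ u y - u y) hn (hc.sub hc')
      (fun y hy => (hGH y hy).sub (hGu y hy))
      (fun y hy => (abs_le.1 (hs y (by simpa using hy))).2) x hxs
    have h2 := max_principle (M := ε) (w := fun y => u y - poissonInt σ u y) hn (hc'.sub hc)
      (fun y hy => (hGu y hy).sub (hGH y hy))
      (fun y hy => by linarith [(abs_le.1 (hs y (by simpa using hy))).1]) x hxs
    rw [abs_le]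
    constructor <;> linarith
  have h0 : |poissonInt σ u x - u x| ≤ 0 := le_of_forall_pos_le_add fun ε hε => by
    simpa using key ε hε
  have := abs_nonpos_iff.1 h0
  rw [sub_eq_zero] at this
  exact this.symm

/-- The mean value property is the Poisson formula at the centre. -/
lemma SphProb.mean_value {n : ℕ} (hn : 1 ≤ n) {σ : Measure (Eucl n)} (h : SphProb n σ)
    {u : Eucl n → ℝ} (hu : ContinuousOn u (closedBall 0 1))
    (hg : ∀ x ∈ ball (0 : Eucl n) 1, GenHarm u x) : ∫ ζ, u ζ ∂σ = u 0 := by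
  rw [h.poisson_formula hn hu hg (x := 0) (by simp)]
  refine integral_congr_ae ?_
  filter_upwards [h.supp] with ζ hζ
  have : ‖ζ‖ = 1 := by simpa using hζ
  simp [poissonK, this]

/-! ### Normal form of Möbius transformations -/

lemma invn_smul_map {n : ℕ} {l : ℝ} (hl : 0 < l) (A : Eucl n ≃ₗᵢ[ℝ] Eucl n) (v : Eucl n) :
    invn (l • A v) = l⁻¹ • A (invn v) := by
  rw [invn, invn, norm_smul, A.norm_map, Real.norm_of_nonneg hl.le, map_smul, smul_smul, smul_smul]
  congr 1
  field_simp

lemma norm_invn {n : ℕ} (v : Eucl n) : ‖invn v‖ = ‖v‖⁻¹ := by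
  rw [invn, norm_smul, norm_inv, norm_pow, norm_norm]
  rcases eq_or_ne ‖v‖ 0 with h | h
  · simp [h]
  · field_simp

lemma invn_invn {n : ℕ} (v : Eucl n) : invn (invn v) = v := by
  rcases eq_or_ne v 0 with rfl | h
  · simp [invn]
  · have : ‖v‖ ≠ 0 := norm_ne_zero_iff.2 h
    rw [invn, norm_invn, invn, smul_smul]
    field_simp
    simp

/-- The reflection in the hyperplane orthogonal to `w`. -/
noncomputable abbrev orthRefl {n : ℕ} (w : Eucl n) : Eucl n ≃ₗᵢ[ℝ] Eucl n := (ℝ ∙ w)ᗮ.reflection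

lemma orthRefl_apply {n : ℕ} (w v : Eucl n) :
    orthRefl w v = v - (2 * (⟪v, w⟫_ℝ / ‖w‖ ^ 2)) • w := by
  rw [orthRefl, Submodule.reflection_orthogonal_apply, Submodule.reflection_singleton_apply,
    real_inner_comm]
  simp [two_smul, two_mul, add_smul]

/-- An inversion conjugated by a translation is again an inversion, up to similarity. -/
lemma invn_add_invn {n : ℕ} {w y : Eucl n} (hw : w ≠ 0) (hy : y ≠ 0) (hyw : y + invn w ≠ 0) :
    invn (w + invn y) = invn w + (‖w‖ ^ 2)⁻¹ • orthRefl w (invn (y + invn w)) := by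
  have hw' : ‖w‖ ≠ 0 := norm_ne_zero_iff.2 hw
  have hy' : ‖y‖ ≠ 0 := norm_ne_zero_iff.2 hy
  have hD' : ‖y + invn w‖ ≠ 0 := norm_ne_zero_iff.2 hyw
  set D := ‖y + invn w‖ ^ 2 with hD
  have hD0 : D ≠ 0 := pow_ne_zero 2 hD'
  have eD : D = ‖y‖ ^ 2 + 2 * (⟪y, w⟫_ℝ / ‖w‖ ^ 2) + (‖w‖ ^ 2)⁻¹ := by
    rw [hD, norm_add_sq_real, norm_invn]
    simp only [invn, inner_smul_right]
    field_simp
  have e1 : ‖w + invn y‖ ^ 2 = ‖w‖ ^ 2 * D / ‖y‖ ^ 2 := by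
    rw [norm_add_sq_real, norm_invn, eD]
    simp only [invn, inner_smul_right, real_inner_comm y w]
    field_simp
  have e2 : invn (y + invn w) = D⁻¹ • (y + invn w) := rfl
  have e3 : ⟪y + invn w, w⟫_ℝ = ⟪y, w⟫_ℝ + 1 := by
    rw [inner_add_left, invn, inner_smul_left, real_inner_self_eq_norm_sq, conj_trivial,
      inv_mul_cancel₀ (pow_ne_zero 2 hw')]
  rw [orthRefl_apply, invn, e1, e2, inner_smul_left, e3, conj_trivial, invn, invn]
  clear_value D
  match_scalars
  · field_simp
    rw [eD]
    field_simp
    ring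
  · field_simp

/-- `g` agrees on `ℝⁿ` with a Euclidean similarity. -/
def IsSim (n : ℕ) (g : EuclHat n → EuclHat n) : Prop :=
  ∃ (b : Eucl n) (l : ℝ) (A : Eucl n ≃ₗᵢ[ℝ] Eucl n), 0 < l ∧ ∀ x : Eucl n, g ↑x = ↑(b + l • A x)

/-- `g` agrees on `ℝⁿ` with an inversion with pole `a` followed by a Euclidean similarity. -/
def IsInvSim (n : ℕ) (g : EuclHat n → EuclHat n) : Prop :=
  ∃ (a b : Eucl n) (l : ℝ) (A : Eucl n ≃ₗᵢ[ℝ] Eucl n), 0 < l ∧ g ↑a = OnePoint.infty ∧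
    ∀ x : Eucl n, x ≠ a → g ↑x = ↑(b + l • A (invn (x - a)))

lemma sphereRefl_infty {n : ℕ} (c : Eucl n) (r : ℝ) :
    sphereRefl n c r OnePoint.infty = ↑c := rfl

lemma sphereRefl_self {n : ℕ} (c : Eucl n) (r : ℝ) :
    sphereRefl n c r ↑c = OnePoint.infty := if_pos rfl

lemma sphereRefl_coe {n : ℕ} (c : Eucl n) (r : ℝ) {z : Eucl n} (hz : z ≠ c) :
    sphereRefl n c r ↑z = ↑(c + r ^ 2 • invn (z - c)) := by
  refine (if_neg hz).trans ?_
  rw [invn, smul_smul, div_eq_mul_inv]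

lemma hyperRefl_coe {n : ℕ} {a : Eucl n} (ha : ‖a‖ = 1) (t : ℝ) (z : Eucl n) :
    hyperRefl n a t ↑z = ↑((2 * t) • a + orthRefl a z) := by
  have : hyperRefl n a t ↑z = ↑(z - (2 * (⟪z, a⟫_ℝ - t)) • a) := rfl
  rw [this, orthRefl_apply, ha]
  congr 1
  simp only [one_pow, div_one, mul_sub, sub_smul]
  abel

lemma hyper_comp_sim {n : ℕ} {a : Eucl n} (ha : ‖a‖ = 1) (t : ℝ) {g : EuclHat n → EuclHat n}
    (hg : IsSim n g) : IsSim n (hyperRefl n a t ∘ g) := by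
  obtain ⟨b, l, A, hl, h⟩ := hg
  refine ⟨(2 * t) • a + orthRefl a b, l, A.trans (orthRefl a), hl, fun x => ?_⟩
  rw [Function.comp_apply, h, hyperRefl_coe ha]
  simp [add_assoc]

lemma hyper_comp_invSim {n : ℕ} {a : Eucl n} (ha : ‖a‖ = 1) (t : ℝ) {g : EuclHat n → EuclHat n}
    (hg : IsInvSim n g) : IsInvSim n (hyperRefl n a t ∘ g) := by
  obtain ⟨a', b, l, A, hl, h0, h⟩ := hg
  refine ⟨a', (2 * t) • a + orthRefl a b, l, A.trans (orthRefl a), hl, ?_, fun x hx => ?_⟩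
  · rw [Function.comp_apply, h0]; rfl
  · rw [Function.comp_apply, h x hx, hyperRefl_coe ha]
    simp [add_assoc]

lemma sphere_comp_sim {n : ℕ} (c : Eucl n) {r : ℝ} (hr : 0 < r) {g : EuclHat n → EuclHat n}
    (hg : IsSim n g) : IsInvSim n (sphereRefl n c r ∘ g) := by
  obtain ⟨b, l, A, hl, h⟩ := hg
  -- the pole is the preimage of the centre `c`
  set a := A.symm (l⁻¹ • (c - b)) with ha
  have e : ∀ x, b + l • A x - c = l • A (x - a) := by
    intro x
    rw [map_sub, ha, A.apply_symm_apply, smul_sub, smul_smul, mul_inv_cancel₀ hl.ne', one_smul]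
    abel
  refine ⟨a, c, r ^ 2 * l⁻¹, A, by positivity, ?_, fun x hx => ?_⟩
  · have : b + l • A a = c := by rw [← sub_eq_zero, e]; simp
    rw [Function.comp_apply, h, this, sphereRefl_self]
  · have : b + l • A x ≠ c := by
      rw [← sub_ne_zero, e]
      simpa [hl.ne', sub_eq_zero] using hx
    rw [Function.comp_apply, h, sphereRefl_coe c r this, e, invn_smul_map hl, smul_smul]

lemma sphere_comp_invSim {n : ℕ} (c : Eucl n) {r : ℝ} (hr : 0 < r) {g : EuclHat n → EuclHat n}
    (hg : IsInvSim n g) : IsSim n (sphereRefl n c r ∘ g) ∨ IsInvSim n (sphereRefl n c r ∘ g) := by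
  obtain ⟨a, b, l, A, hl, h0, h⟩ := hg
  have hinv0 : ∀ v : Eucl n, invn v = 0 ↔ v = 0 := fun v => by
    rw [← norm_eq_zero, norm_invn, inv_eq_zero, norm_eq_zero]
  rcases eq_or_ne b c with rfl | hbc
  · refine Or.inl ⟨b - (r ^ 2 * l⁻¹) • A a, r ^ 2 * l⁻¹, A, by positivity, fun x => ?_⟩
    rcases eq_or_ne x a with rfl | hx
    · rw [Function.comp_apply, h0, sphereRefl_infty, sub_add_cancel]
    · have hne : b + l • A (invn (x - a)) ≠ b := by
        simpa [hl.ne', hinv0, sub_eq_zero] using hx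
      rw [Function.comp_apply, h x hx, sphereRefl_coe b r hne, add_sub_cancel_left,
        invn_smul_map hl, invn_invn, smul_smul, map_sub, smul_sub]
      congr 1
      abel
  · set w := A.symm (l⁻¹ • (b - c)) with hw
    have hlw : l • A w = b - c := by
      rw [hw, A.apply_symm_apply, smul_smul, mul_inv_cancel₀ hl.ne', one_smul]
    have hw0 : w ≠ 0 := by
      rw [hw]; simpa [hl.ne', sub_eq_zero] using hbc
    have hw' : ‖w‖ ≠ 0 := norm_ne_zero_iff.2 hw0
    have e : ∀ v, b + l • A v - c = l • A (w + v) := by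
      intro v
      rw [map_add, smul_add, hlw]
      abel
    refine Or.inr ⟨a - invn w, c + (r ^ 2 * l⁻¹) • A (invn w), r ^ 2 * l⁻¹ * (‖w‖ ^ 2)⁻¹,
      (orthRefl w).trans A, by positivity, ?_, fun x hx => ?_⟩
    · have hne : a - invn w ≠ a := by simpa [hinv0] using hw0
      have : b + l • A (invn (a - invn w - a)) = c := by
        have e3 : invn (-invn w) = -w := by
          have := invn_invn w
          rw [invn, norm_neg, smul_neg]
          rw [invn] at this
          rw [this]
        rw [← sub_eq_zero, e, sub_sub_cancel_left, e3]
        simp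
      rw [Function.comp_apply, h _ hne, this, sphereRefl_self]
    · rcases eq_or_ne x a with rfl | hxa
      · rw [Function.comp_apply, h0, sphereRefl_infty, sub_sub_cancel, invn_invn]
        have e4 : (‖w‖ ^ 2)⁻¹ • orthRefl w w = - invn w := by
          rw [orthRefl, Submodule.reflection_orthogonalComplement_singleton_eq_neg, smul_neg]
          rfl
        rw [LinearIsometryEquiv.trans_apply, mul_smul (r ^ 2 * l⁻¹), ← A.map_smul (‖w‖ ^ 2)⁻¹, e4]
        simp
      · have hy0 : x - a ≠ 0 := sub_ne_zero.2 hxa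
        have hyw : x - a + invn w ≠ 0 := by
          rw [sub_add, ]; exact sub_ne_zero.2 hx
        have hne : b + l • A (invn (x - a)) ≠ c := by
          rw [← sub_ne_zero, e]
          intro h5
          have h6 : w + invn (x - a) = 0 := by
            rcases smul_eq_zero.1 h5 with h6 | h6
            · exact absurd h6 hl.ne'
            · exact A.map_eq_zero_iff.1 h6
          have h7 : x - a = invn (-w) := by rw [← eq_neg_of_add_eq_zero_right h6, invn_invn]
          apply hyw
          rw [h7, invn, invn, norm_neg, smul_neg, neg_add_cancel]
        rw [Function.comp_apply, h x hxa, sphereRefl_coe c r hne, e, invn_smul_map hl, smul_smul,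
          invn_add_invn hw0 hy0 hyw, map_add, smul_add, map_smul, smul_smul, sub_sub_eq_add_sub,
          LinearIsometryEquiv.trans_apply, add_sub_right_comm, add_assoc]

/-- Every Möbius transformation is a similarity or an inversion followed by a similarity. -/
lemma IsMobiusHat.normal_form {n : ℕ} {g : EuclHat n → EuclHat n} (hg : IsMobiusHat n g) :
    IsSim n g ∨ IsInvSim n g := by
  obtain ⟨L, -, hL, rfl⟩ := hg
  induction L with
  | nil => exact Or.inl ⟨0, 1, LinearIsometryEquiv.refl ℝ _, one_pos, fun x => by simp⟩
  | cons f L ih =>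
    rw [List.foldr_cons]
    rcases hL f (by simp) with ⟨c, r, hr, rfl⟩ | ⟨a, t, ha, rfl⟩
    · rcases ih fun f hf => hL f (by simp [hf]) with h | h
      · exact Or.inr (sphere_comp_sim c hr h)
      · exact sphere_comp_invSim c hr h
    · exact (ih fun f hf => hL f (by simp [hf])).imp (hyper_comp_sim ha t)
        (hyper_comp_invSim ha t)

/-! ### The conformal weight -/

/-- The exponent `(n-2)/2` turns `normDeriv` into the conformal weight `|Dφ|^((n-2)/2)`. -/
noncomputable def confWt {n : ℕ} (φ : Eucl n → Eucl n) (x : Eucl n) : ℝ :=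
  normDeriv φ x ^ (((n : ℝ) - 2) / 2)

lemma normDeriv_eq {n : ℕ} (hn : n ≠ 0) {φ : Eucl n → Eucl n} {x : Eucl n} {l : ℝ} (hl : 0 < l)
    (A : Eucl n ≃ₗᵢ[ℝ] Eucl n)
    (h : HasFDerivAt φ (l • (A.toContinuousLinearEquiv : Eucl n →L[ℝ] Eucl n)) x) :
    normDeriv φ x = l := by
  have e : jacMatrix φ x = LinearMap.toMatrix (EuclideanSpace.basisFun (Fin n) ℝ).toBasis
      (EuclideanSpace.basisFun (Fin n) ℝ).toBasis (l • A.toLinearIsometry.toLinearMap) := by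
    ext i j
    rw [jacMatrix, h.fderiv, LinearMap.toMatrix_apply]
    simp [basisV]
  have hdet : |LinearMap.det A.toLinearIsometry.toLinearMap| = 1 := by
    rw [← LinearMap.normDet_eq_abs_det, LinearIsometry.normDet_eq_one]
  rw [normDeriv, e, LinearMap.det_toMatrix, LinearMap.det_smul, abs_mul, hdet, mul_one, abs_pow,
    abs_of_pos hl, finrank_euclideanSpace_fin, Real.pow_rpow_inv_natCast hl.le hn]

lemma hasFDerivAt_invn {n : ℕ} {y : Eucl n} (hy : y ≠ 0) :
    HasFDerivAt (invn (n := n))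
      ((‖y‖ ^ 2)⁻¹ • ((orthRefl y).toContinuousLinearEquiv : Eucl n →L[ℝ] Eucl n)) y := by
  have h := EuclideanGeometry.hasFDerivAt_inversion (R := 1) hy
  have e : EuclideanGeometry.inversion (0 : Eucl n) 1 = invn := by
    funext z
    simp [EuclideanGeometry.inversion, invn]
  rw [e, sub_zero, dist_zero_right, one_div, inv_pow] at h
  exact h

/-- The weighted composition `f ↦ |Dφ|^((n-2)/2) · (f ∘ φ)` with a Möbius map preserves
harmonicity; the weight is positive and bounded. -/
lemma confWt_spec {n : ℕ} (hn : 2 ≤ n) {φ : Eucl n → Eucl n} (hφ : IsMobiusRestr n φ (uBall n))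
    (hmaps : MapsTo φ (uBall n) (uBall n)) :
    (∃ M, ∀ x ∈ uBall n, confWt φ x ≤ M) ∧ ∀ x ∈ uBall n, 0 < confWt φ x ∧ ContinuousAt φ x ∧
      ∀ (F : Type) [NormedAddCommGroup F] [NormedSpace ℝ F] (f : Eucl n → F),
        ContDiffAt ℝ 2 f (φ x) → lap f (φ x) = 0 →
          ContDiffAt ℝ 2 (fun y => confWt φ y • f (φ y)) x ∧
          lap (fun y => confWt φ y • f (φ y)) x = 0 := by
  have hn0 : n ≠ 0 := by omega
  have hm : 0 ≤ ((n : ℝ) - 2) / 2 := by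
    have : (2 : ℝ) ≤ n := by exact_mod_cast hn
    linarith
  obtain ⟨g, hg, hgφ⟩ := hφ
  have hnhds : ∀ x ∈ uBall n, uBall n ∈ 𝓝 x := fun x hx => isOpen_ball.mem_nhds hx
  rcases hg.normal_form with ⟨b, l, A, hl, h⟩ | ⟨a, b, l, A, hl, h0, h⟩
  · have hφe : ∀ x ∈ uBall n, φ x = b + l • A x := fun x hx =>
      OnePoint.coe_injective ((hgφ x hx).symm.trans (h x))
    have hder : ∀ x ∈ uBall n, HasFDerivAt φ
        (l • (A.toContinuousLinearEquiv : Eucl n →L[ℝ] Eucl n)) x := fun x hx =>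
      ((A.toContinuousLinearEquiv.hasFDerivAt.const_smul l).const_add b).congr_of_eventuallyEq
        (eventually_of_mem (hnhds x hx) hφe)
    have hw : ∀ x ∈ uBall n, confWt φ x = l ^ (((n : ℝ) - 2) / 2) := fun x hx => by
      rw [confWt, normDeriv_eq hn0 hl A (hder x hx)]
    refine ⟨⟨_, fun x hx => (hw x hx).le⟩, fun x hx => ⟨?_, (hder x hx).continuousAt, ?_⟩⟩
    · rw [hw x hx]; positivity
    · intro F _ _ f hf hf0
      have hev : (fun y => confWt φ y • f (φ y)) =ᶠ[𝓝 x]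
          fun y => l ^ (((n : ℝ) - 2) / 2) • f (b + l • A y) :=
        eventually_of_mem (hnhds x hx) fun y hy => by dsimp only; rw [hw y hy, hφe y hy]
      rw [hφe x hx] at hf hf0
      obtain ⟨h1, h2⟩ := lap_affine f b x l A hf
      refine ⟨(h1.const_smul _).congr_of_eventuallyEq hev, ?_⟩
      rw [lap_congr hev]
      have := lap_clm_comp ((l ^ (((n : ℝ) - 2) / 2)) • ContinuousLinearMap.id ℝ F) h1
      rw [h2, hf0, smul_zero, map_zero] at this
      exact this
  · -- `φ` is finite on the ball, so the pole lies outside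
    have ha : ∀ x ∈ uBall n, x ≠ a := by
      rintro x hx rfl
      exact OnePoint.coe_ne_infty (φ x) ((hgφ x hx).symm.trans h0)
    have hφe : ∀ x ∈ uBall n, φ x = b + l • A (invn (x - a)) := fun x hx =>
      OnePoint.coe_injective ((hgφ x hx).symm.trans (h x (ha x hx)))
    have hder : ∀ x ∈ uBall n, HasFDerivAt φ ((l * (‖x - a‖ ^ 2)⁻¹) •
        (((orthRefl (x - a)).trans A).toContinuousLinearEquiv : Eucl n →L[ℝ] Eucl n)) x := by
      intro x hx
      have h1 := HasFDerivAt.comp (f := fun y => y - a) (g := invn) x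
        (hasFDerivAt_invn (sub_ne_zero.2 (ha x hx))) ((hasFDerivAt_id x).sub_const a)
      have h2 := ((A.toContinuousLinearEquiv.hasFDerivAt.comp x h1).const_smul l).const_add b
      refine (h2.congr_of_eventuallyEq (eventually_of_mem (hnhds x hx) hφe)).congr_fderiv ?_
      ext v : 1
      simp [mul_smul]
    have hpos : ∀ x ∈ uBall n, 0 < ‖x - a‖ := fun x hx =>
      norm_pos_iff.2 (sub_ne_zero.2 (ha x hx))
    have hnd : ∀ x ∈ uBall n, normDeriv φ x = l * (‖x - a‖ ^ 2)⁻¹ := fun x hx =>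
      normDeriv_eq hn0 (by have := hpos x hx; positivity) _ (hder x hx)
    have hw : ∀ x ∈ uBall n, confWt φ x = l ^ (((n : ℝ) - 2) / 2) * kelvinWt n (x - a) := by
      intro x hx
      rw [confWt, hnd x hx, Real.mul_rpow hl.le (by positivity), Real.inv_rpow (by positivity),
        kelvinWt, ← Real.rpow_neg (by positivity)]
      congr 2
      ring
    refine ⟨⟨((1 + ‖b‖) ^ 2 * l⁻¹) ^ (((n : ℝ) - 2) / 2), fun x hx => ?_⟩,
      fun x hx => ⟨?_, (hder x hx).continuousAt, ?_⟩⟩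
    · -- `l / ‖x - a‖ = ‖φ x - b‖` is at most `1 + ‖b‖`
      have h1 : l * ‖x - a‖⁻¹ ≤ 1 + ‖b‖ := by
        have e : φ x - b = l • A (invn (x - a)) := by rw [hφe x hx]; abel
        have e2 : ‖φ x - b‖ = l * ‖x - a‖⁻¹ := by
          rw [e, norm_smul, A.norm_map, norm_invn, Real.norm_of_nonneg hl.le]
        have h3 : ‖φ x‖ < 1 := by simpa [uBall] using hmaps hx
        rw [← e2]
        linarith [norm_sub_le (φ x) b]
      have h2 : l * (‖x - a‖ ^ 2)⁻¹ = (l * ‖x - a‖⁻¹) ^ 2 * l⁻¹ := by field_simp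
      rw [confWt, hnd x hx, h2]
      have := hpos x hx
      gcongr
    · rw [confWt, hnd x hx]
      have := hpos x hx
      positivity
    · intro F _ _ f hf hf0
      rw [hφe x hx] at hf hf0
      have hxa := sub_ne_zero.2 (ha x hx)
      obtain ⟨h1, h2⟩ := lap_affine f b (invn (x - a)) l A hf
      rw [hf0, smul_zero] at h2
      have h3 := kelvin_harm _ hxa h1 h2
      have h4 : ContDiffAt ℝ 2 (fun z => kelvinWt n z • f (b + l • A (invn z))) (x - a) :=
        (contDiffAt_kelvinWt hxa).smul (h1.comp _ (contDiffAt_invn hxa))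
      have e : ∀ y, -a + (1 : ℝ) • LinearIsometryEquiv.refl ℝ (Eucl n) y = y - a := fun y => by
        simp [sub_eq_neg_add]
      obtain ⟨h5, h6⟩ := lap_affine (fun z => kelvinWt n z • f (b + l • A (invn z))) (-a) x 1
        (LinearIsometryEquiv.refl ℝ (Eucl n)) (by rw [e x]; exact h4)
      simp only [e] at h5 h6
      rw [h3, smul_zero] at h6
      have hev : (fun y => confWt φ y • f (φ y)) =ᶠ[𝓝 x] fun y =>
          l ^ (((n : ℝ) - 2) / 2) • (kelvinWt n (y - a) • f (b + l • A (invn (y - a)))) :=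
        eventually_of_mem (hnhds x hx) fun y hy => by
          dsimp only; rw [hw y hy, mul_smul, hφe y hy]
      refine ⟨(h5.const_smul _).congr_of_eventuallyEq hev, ?_⟩
      rw [lap_congr hev]
      have := lap_clm_comp ((l ^ (((n : ℝ) - 2) / 2)) • ContinuousLinearMap.id ℝ F) h5
      rw [h6, map_zero] at this
      exact this

/-! ### The norm estimate -/

lemma SphProb.integrable_prod {n : ℕ} {σ : Measure (Eucl n)} (h : SphProb n σ)
    {g : Eucl n × Eucl n → ℝ} (hg : ContinuousOn g (sphere 0 1 ×ˢ sphere 0 1)) :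
    Integrable g (σ.prod σ) := by
  have := h.prob
  have h1 : IntegrableOn g (sphere 0 1 ×ˢ sphere 0 1) (σ.prod σ) :=
    hg.integrableOn_compact ((isCompact_sphere 0 1).prod (isCompact_sphere 0 1))
  rwa [IntegrableOn, ← Measure.prod_restrict, Measure.restrict_eq_self_of_ae_mem h.supp] at h1

lemma lap_scale {n : ℕ} {F : Type*} [NormedAddCommGroup F] [NormedSpace ℝ F] {f : Eucl n → F}
    (t : ℝ) {x : Eucl n} (h : ContDiffAt ℝ 2 f (t • x)) (h0 : lap f (t • x) = 0) :
    ContDiffAt ℝ 2 (fun y => f (t • y)) x ∧ lap (fun y => f (t • y)) x = 0 := by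
  have e : ∀ y : Eucl n, 0 + t • LinearIsometryEquiv.refl ℝ (Eucl n) y = t • y := fun y => by simp
  have := lap_affine f 0 x t (LinearIsometryEquiv.refl ℝ (Eucl n)) (by rwa [e x])
  simp only [e, h0, smul_zero] at this
  exact this

/-- Jensen's inequality for the power `p`, from the tangent line at the mean value. -/
lemma SphProb.rpow_integral_le {n : ℕ} {σ : Measure (Eucl n)} (h : SphProb n σ) {p : ℝ}
    (hp : 1 < p) {K g : Eucl n → ℝ} (hK : ContinuousOn K (sphere 0 1))
    (hg : ContinuousOn g (sphere 0 1)) (hK0 : ∀ ζ ∈ sphere (0 : Eucl n) 1, 0 ≤ K ζ)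
    (hg0 : ∀ ζ ∈ sphere (0 : Eucl n) 1, 0 ≤ g ζ) (hK1 : ∫ ζ, K ζ ∂σ = 1) :
    (∫ ζ, K ζ * g ζ ∂σ) ^ p ≤ ∫ ζ, K ζ * g ζ ^ p ∂σ := by
  set m := ∫ ζ, K ζ * g ζ ∂σ with hm
  have hgp : ContinuousOn (fun ζ => g ζ ^ p) (sphere 0 1) :=
    hg.rpow_const fun _ _ => Or.inr (by linarith)
  have hm0 : 0 ≤ m := integral_nonneg_of_ae (h.supp.mono fun ζ hζ => mul_nonneg (hK0 ζ hζ) (hg0 ζ hζ))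
  rcases hm0.eq_or_lt with h0 | h0
  · rw [← h0, Real.zero_rpow (by linarith)]
    exact integral_nonneg_of_ae (h.supp.mono fun ζ hζ =>
      mul_nonneg (hK0 ζ hζ) (Real.rpow_nonneg (hg0 ζ hζ) p))
  have hi1 : Integrable (fun ζ => m ^ p * (1 - p) * K ζ) σ := (h.integrable hK).const_mul _
  have hi2 : Integrable (fun ζ => m ^ p * p / m * (K ζ * g ζ)) σ :=
    (h.integrable (hK.mul hg)).const_mul _
  have e : m ^ p = ∫ ζ, m ^ p * (1 - p) * K ζ + m ^ p * p / m * (K ζ * g ζ) ∂σ := by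
    rw [integral_add hi1 hi2, integral_const_mul, integral_const_mul, hK1, ← hm]
    field_simp
    ring
  rw [e]
  refine integral_mono_ae (hi1.add hi2) (h.integrable (hK.mul hgp)) ?_
  filter_upwards [h.supp] with ζ hζ
  have h1 := one_add_mul_self_le_rpow_one_add (s := g ζ / m - 1)
    (by linarith [div_nonneg (hg0 ζ hζ) hm0]) hp.le
  rw [add_sub_cancel, Real.div_rpow (hg0 ζ hζ) hm0, le_div_iff₀ (by positivity)] at h1
  have h2 := mul_le_mul_of_nonneg_left h1 (hK0 ζ hζ)
  refine le_trans (le_of_eq ?_) h2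
  field_simp
  ring

/-- `|f|^p` is dominated by the Poisson integral of its values on a smaller sphere. -/
lemma SphProb.rpow_norm_le {n : ℕ} (hn : 1 ≤ n) {σ : Measure (Eucl n)} (h : SphProb n σ) {p : ℝ}
    (hp : 1 < p) {f : Eucl n → ℂ} (hf : HarmOn f (uBall n)) {R : ℝ} (hR0 : 0 < R) (hR : R < 1)
    {y : Eucl n} (hy : ‖y‖ < 1) :
    ‖f (R • y)‖ ^ p ≤ ∫ η, poissonK n y η * ‖f (R • η)‖ ^ p ∂σ := by
  have hmem : ∀ x ∈ closedBall (0 : Eucl n) 1, R • x ∈ uBall n := by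
    intro x hx
    rw [mem_closedBall_zero_iff] at hx
    rw [uBall, mem_ball_zero_iff, norm_smul, Real.norm_of_nonneg hR0.le]
    nlinarith [norm_nonneg x]
  have hsc : ∀ x ∈ closedBall (0 : Eucl n) 1, ContDiffAt ℝ 2 (fun y => f (R • y)) x ∧
      lap (fun y => f (R • y)) x = 0 := fun x hx =>
    lap_scale R (hf.1.contDiffAt (isOpen_ball.mem_nhds (hmem x hx))) (hf.2 _ (hmem x hx))
  have hfc : ContinuousOn (fun y => f (R • y)) (closedBall 0 1) := fun x hx =>
    (hsc x hx).1.continuousAt.continuousWithinAt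
  have hfS : ContinuousOn (fun y => ‖f (R • y)‖) (sphere 0 1) :=
    (hfc.mono sphere_subset_closedBall).norm
  have hK := continuousOn_poissonK_right hy
  -- rotate the values so that `f (R • y)` becomes real and nonnegative
  obtain ⟨c, hc1, hc⟩ : ∃ c : ℂ, ‖c‖ = 1 ∧ c * f (R • y) = ‖f (R • y)‖ := by
    obtain ⟨c, hc, hc'⟩ := RCLike.exists_norm_eq_mul_self (f (R • y))
    exact ⟨c, hc, hc'.symm⟩
  set L : ℂ →L[ℝ] ℝ := Complex.reCLM.comp (ContinuousLinearMap.mul ℝ ℂ c)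
  have hL : ∀ z, L z = (c * z).re := fun z => rfl
  have h1 := h.poisson_formula hn (u := fun x => L (f (R • x)))
    (L.continuous.comp_continuousOn hfc)
    (fun x hx => by
      obtain ⟨h2, h3⟩ := hsc x (ball_subset_closedBall hx)
      refine genHarm_of_lap (L.contDiff.contDiffAt.comp x h2) ?_
      rw [lap_clm_comp L h2, h3, map_zero]) hy
  have h2 : ‖f (R • y)‖ ≤ ∫ η, poissonK n y η * ‖f (R • η)‖ ∂σ := by
    rw [hL, hc, Complex.ofReal_re] at h1
    rw [h1]
    refine integral_mono_ae (h.integrable (hK.mul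
      (L.continuous.comp_continuousOn (hfc.mono sphere_subset_closedBall))))
      (h.integrable (hK.mul hfS)) (Eventually.of_forall fun η => ?_)
    refine mul_le_mul_of_nonneg_left ?_ (poissonK_nonneg η hy.le)
    rw [hL]
    refine (Complex.re_le_norm _).trans ?_
    rw [norm_mul, hc1, one_mul]
  exact (Real.rpow_le_rpow (norm_nonneg _) h2 (by linarith)).trans
    (h.rpow_integral_le hp hK hfS (fun η _ => poissonK_nonneg η hy.le)
      (fun η _ => norm_nonneg _) (h.integral_poissonK hn hy))

/-- The weighted composition of the Poisson kernel with a Möbius map is harmonic. -/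
lemma confWt_poissonK {n : ℕ} (hn : 2 ≤ n) {φ : Eucl n → Eucl n}
    (hφ : IsMobiusRestr n φ (uBall n)) (hmaps : MapsTo φ (uBall n) (uBall n)) {r R : ℝ}
    {x η : Eucl n} (hx : r • x ∈ uBall n) (hxR : ‖R⁻¹ • φ (r • x)‖ < 1) (hη : ‖η‖ = 1) :
    ContDiffAt ℝ 2 (fun y => confWt φ (r • y) * poissonK n (R⁻¹ • φ (r • y)) η) x ∧
      lap (fun y => confWt φ (r • y) * poissonK n (R⁻¹ • φ (r • y)) η) x = 0 := by
  have hne := sub_ne_zero_of_ball hxR hη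
  obtain ⟨h1, h2⟩ := lap_scale R⁻¹ (contDiffAt_poissonK_left hne) (lap_poissonK hne hη)
  obtain ⟨h3, h4⟩ := ((confWt_spec hn hφ hmaps).2 _ hx).2.2 ℝ _ h1 h2
  exact lap_scale r h3 h4

/-- The integral estimate, comparing with the values of `f` on a sphere of radius `R` whose ball
contains `φ (r • B)`: majorize `‖f‖ ^ p` by a Poisson integral, exchange the integrals, and apply
the mean value property to the weighted composition of the Poisson kernel. -/
lemma SphProb.estimate_at {n : ℕ} (hn : 2 ≤ n) {σ : Measure (Eucl n)} (h : SphProb n σ) {p : ℝ}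
    (hp : 1 < p) {φ : Eucl n → Eucl n} (hφ : IsMobiusRestr n φ (uBall n))
    (hmaps : MapsTo φ (uBall n) (uBall n)) {f : Eucl n → ℂ} (hf : HarmOn f (uBall n))
    {r R : ℝ} (hr : r ∈ Ico (0 : ℝ) 1) (hR0 : 0 < R) (hR : R < 1)
    (hφR : ∀ x ∈ closedBall (0 : Eucl n) 1, ‖φ (r • x)‖ < R) :
    Integrable (fun ζ => confWt φ (r • ζ) * ‖f (φ (r • ζ))‖ ^ p) σ ∧
    ∫ ζ, confWt φ (r • ζ) * ‖f (φ (r • ζ))‖ ^ p ∂σ ≤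
      confWt φ 0 * ((1 + ‖φ 0‖ / R) * (1 - ‖φ 0‖ / R) ^ (1 - (n : ℝ))) *
        ∫ η, ‖f (R • η)‖ ^ p ∂σ := by
  have := h.prob
  obtain ⟨-, hspec⟩ := confWt_spec hn hφ hmaps
  have hmem : ∀ x ∈ closedBall (0 : Eucl n) 1, ∀ t ∈ Ico (0 : ℝ) 1, t • x ∈ uBall n := by
    intro x hx t ht
    rw [mem_closedBall_zero_iff] at hx
    rw [uBall, mem_ball_zero_iff, norm_smul, Real.norm_of_nonneg ht.1]
    nlinarith [norm_nonneg x, ht.1, ht.2]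
  have hφR' : ∀ x ∈ closedBall (0 : Eucl n) 1, ‖R⁻¹ • φ (r • x)‖ < 1 := by
    intro x hx
    rw [norm_smul, norm_inv, Real.norm_of_nonneg hR0.le, inv_mul_lt_iff₀ hR0, mul_one]
    exact hφR x hx
  have hSC : sphere (0 : Eucl n) 1 ⊆ closedBall 0 1 := sphere_subset_closedBall
  have hwc : ContinuousOn (fun x => confWt φ (r • x)) (closedBall 0 1) := by
    intro x hx
    have h1 := ((hspec _ (hmem x hx r hr)).2.2 ℝ (fun _ => 1) contDiffAt_const (by
      rw [lap_eq]; simp)).1.continuousAt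
    simp only [smul_eq_mul, mul_one] at h1
    exact (ContinuousAt.comp (f := fun x => r • x) h1 (by fun_prop)).continuousWithinAt
  have hφc : ContinuousOn (fun x => φ (r • x)) (closedBall 0 1) := by
    intro x hx
    have h1 := (hspec _ (hmem x hx r hr)).2.1
    exact (ContinuousAt.comp (f := fun x => r • x) h1 (by fun_prop)).continuousWithinAt
  have hfat : ∀ x ∈ uBall n, ContinuousAt f x := fun x hx =>
    (hf.1.contDiffAt (isOpen_ball.mem_nhds hx)).continuousAt
  have hG : ContinuousOn (fun η => ‖f (R • η)‖ ^ p) (sphere 0 1) := by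
    refine ContinuousOn.rpow_const (fun x hx => ?_) fun _ _ => Or.inr (by linarith)
    exact (ContinuousAt.comp (f := fun x => R • x) (hfat _ (hmem x (hSC hx) R ⟨hR0.le, hR⟩))
      (by fun_prop)).norm.continuousWithinAt
  have hG2 : ContinuousOn (fun ζ => confWt φ (r • ζ) * ‖f (φ (r • ζ))‖ ^ p) (sphere 0 1) := by
    refine (hwc.mono hSC).mul
      (ContinuousOn.rpow_const (fun x hx => ?_) fun _ _ => Or.inr (by linarith))
    exact (ContinuousAt.comp_continuousWithinAt (f := fun x => φ (r • x))
      (hfat _ (hmaps (hmem x (hSC hx) r hr))) (hφc.mono hSC x hx)).norm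
  have hJ : ContinuousOn (fun z : Eucl n × Eucl n => confWt φ (r • z.1) *
      (poissonK n (R⁻¹ • φ (r • z.1)) z.2 * ‖f (R • z.2)‖ ^ p))
      (sphere 0 1 ×ˢ sphere 0 1) := by
    refine ((hwc.mono hSC).comp continuousOn_fst fun z hz => hz.1).mul
      (ContinuousOn.mul ?_ (hG.comp continuousOn_snd fun z hz => hz.2))
    have h1 : ContinuousOn (fun z : Eucl n × Eucl n => (R⁻¹ • φ (r • z.1), z.2))
        (sphere 0 1 ×ˢ sphere 0 1) :=
      (((hφc.mono hSC).comp continuousOn_fst fun z hz => hz.1).const_smul R⁻¹).prodMk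
        continuousOn_snd
    intro z hz
    have hz2 : ‖z.2‖ = 1 := by simpa using hz.2
    have h2 : ContinuousAt (fun z : Eucl n × Eucl n => poissonK n z.1 z.2)
        (R⁻¹ • φ (r • z.1), z.2) :=
      (contDiffAt_poissonK (sub_ne_zero_of_ball (hφR' z.1 (hSC hz.1)) hz2)).continuousAt
    exact ContinuousAt.comp_continuousWithinAt
      (f := fun z : Eucl n × Eucl n => (R⁻¹ • φ (r • z.1), z.2)) h2 (h1 z hz)
  have hJi := h.integrable_prod hJ
  -- subharmonicity, at the point `R⁻¹ φ(rζ)` of the unit ball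
  have hsub : ∀ ζ ∈ sphere (0 : Eucl n) 1, confWt φ (r • ζ) * ‖f (φ (r • ζ))‖ ^ p ≤
      ∫ η, confWt φ (r • ζ) * (poissonK n (R⁻¹ • φ (r • ζ)) η * ‖f (R • η)‖ ^ p) ∂σ := by
    intro ζ hζ
    rw [integral_const_mul]
    refine mul_le_mul_of_nonneg_left ?_ (hspec _ (hmem ζ (hSC hζ) r hr)).1.le
    have := h.rpow_norm_le (by omega) hp hf hR0 hR (hφR' ζ (hSC hζ))
    rwa [smul_inv_smul₀ hR0.ne'] at this
  -- mean value property at the centre, then Harnack's bound at `R⁻¹ φ(0)`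
  have hmv : ∀ η ∈ sphere (0 : Eucl n) 1,
      ∫ ζ, confWt φ (r • ζ) * (poissonK n (R⁻¹ • φ (r • ζ)) η * ‖f (R • η)‖ ^ p) ∂σ ≤
      confWt φ 0 * ((1 + ‖φ 0‖ / R) * (1 - ‖φ 0‖ / R) ^ (1 - (n : ℝ))) * ‖f (R • η)‖ ^ p := by
    intro η hη
    have hη' : ‖η‖ = 1 := by simpa using hη
    have hh : ∀ x ∈ closedBall (0 : Eucl n) 1, _ := fun x hx =>
      confWt_poissonK hn hφ hmaps (hmem x hx r hr) (hφR' x hx) hη'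
    have h1 := h.mean_value (by omega)
      (u := fun x => confWt φ (r • x) * poissonK n (R⁻¹ • φ (r • x)) η)
      (fun x hx => (hh x hx).1.continuousAt.continuousWithinAt)
      (fun x hx => genHarm_of_lap (hh x (ball_subset_closedBall hx)).1
        (hh x (ball_subset_closedBall hx)).2)
    simp only [← mul_assoc]
    rw [integral_mul_const, h1]
    refine mul_le_mul_of_nonneg_right ?_ (by positivity)
    rw [smul_zero, mul_assoc]
    have h0 := hφR' 0 (by simp)
    rw [smul_zero] at h0
    have h2 := poissonK_le h0 hη'
    rw [norm_smul, norm_inv, Real.norm_of_nonneg hR0.le, inv_mul_eq_div] at h2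
    exact mul_le_mul_of_nonneg_left h2 (hspec 0 (by simp [uBall])).1.le
  refine ⟨h.integrable hG2, ?_⟩
  calc ∫ ζ, confWt φ (r • ζ) * ‖f (φ (r • ζ))‖ ^ p ∂σ
      ≤ ∫ ζ, ∫ η, confWt φ (r • ζ) * (poissonK n (R⁻¹ • φ (r • ζ)) η * ‖f (R • η)‖ ^ p) ∂σ ∂σ :=
        integral_mono_ae (h.integrable hG2) hJi.integral_prod_left (h.supp.mono hsub)
    _ = ∫ η, ∫ ζ, confWt φ (r • ζ) * (poissonK n (R⁻¹ • φ (r • ζ)) η * ‖f (R • η)‖ ^ p) ∂σ ∂σ :=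
        integral_integral_swap hJi
    _ ≤ ∫ η, confWt φ 0 * ((1 + ‖φ 0‖ / R) * (1 - ‖φ 0‖ / R) ^ (1 - (n : ℝ))) *
          ‖f (R • η)‖ ^ p ∂σ :=
        integral_mono_ae hJi.integral_prod_right ((h.integrable hG).const_mul _)
          (h.supp.mono hmv)
    _ = _ := integral_const_mul _ _

/-- The limit `R → 1` of `SphProb.estimate_at`. -/
lemma SphProb.estimate {n : ℕ} (hn : 2 ≤ n) {σ : Measure (Eucl n)} (h : SphProb n σ) {p : ℝ}
    (hp : 1 < p) {φ : Eucl n → Eucl n} (hφ : IsMobiusRestr n φ (uBall n))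
    (hmaps : MapsTo φ (uBall n) (uBall n)) {f : Eucl n → ℂ} (hf : HarmOn f (uBall n)) {N : ℝ}
    (hN : ∀ R ∈ Ico (0 : ℝ) 1, ∫ η, ‖f (R • η)‖ ^ p ∂σ ≤ N) {r : ℝ} (hr : r ∈ Ico (0 : ℝ) 1) :
    Integrable (fun ζ => confWt φ (r • ζ) * ‖f (φ (r • ζ))‖ ^ p) σ ∧
    ∫ ζ, confWt φ (r • ζ) * ‖f (φ (r • ζ))‖ ^ p ∂σ ≤
      confWt φ 0 * ((1 + ‖φ 0‖) * (1 - ‖φ 0‖) ^ (1 - (n : ℝ))) * N := by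
  obtain ⟨-, hspec⟩ := confWt_spec hn hφ hmaps
  have h0 : (0 : Eucl n) ∈ uBall n := by simp [uBall]
  have hφ0 : ‖φ 0‖ < 1 := by simpa [uBall] using hmaps h0
  have hmem : ∀ x ∈ closedBall (0 : Eucl n) 1, r • x ∈ uBall n := by
    intro x hx
    rw [mem_closedBall_zero_iff] at hx
    rw [uBall, mem_ball_zero_iff, norm_smul, Real.norm_of_nonneg hr.1]
    nlinarith [norm_nonneg x, hr.1, hr.2]
  -- by compactness `φ (r • B)` lies in a ball of radius `‖φ (r • x0)‖ < 1`
  obtain ⟨x0, hx0, hmax⟩ := (isCompact_closedBall (0 : Eucl n) 1).exists_isMaxOn ⟨0, by simp⟩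
    (f := fun x => ‖φ (r • x)‖) (fun x hx => (ContinuousAt.comp (f := fun x => r • x)
      (hspec _ (hmem x hx)).2.1 (by fun_prop)).norm.continuousWithinAt)
  have hR0 : ‖φ (r • x0)‖ < 1 := by simpa [uBall] using hmaps (hmem x0 hx0)
  have hest : ∀ R ∈ Ioo ‖φ (r • x0)‖ 1, _ := fun R hR =>
    h.estimate_at hn hp hφ hmaps hf hr ((norm_nonneg _).trans_lt hR.1) hR.2
      fun x hx => (hmax hx).trans_lt hR.1
  obtain ⟨R1, hR1⟩ := exists_between hR0
  refine ⟨(hest R1 hR1).1, ?_⟩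
  have hlim : Tendsto (fun R : ℝ => confWt φ 0 *
      ((1 + ‖φ 0‖ / R) * (1 - ‖φ 0‖ / R) ^ (1 - (n : ℝ))) * N) (𝓝[<] 1)
      (𝓝 (confWt φ 0 * ((1 + ‖φ 0‖) * (1 - ‖φ 0‖) ^ (1 - (n : ℝ))) * N)) := by
    have hd : ContinuousAt (fun R : ℝ => ‖φ 0‖ / R) 1 :=
      continuousAt_const.div continuousAt_id one_ne_zero
    have hc : ContinuousAt (fun R : ℝ => confWt φ 0 *
        ((1 + ‖φ 0‖ / R) * (1 - ‖φ 0‖ / R) ^ (1 - (n : ℝ))) * N) 1 := by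
      refine (continuousAt_const.mul ((continuousAt_const.add hd).mul
        ((continuousAt_const.sub hd).rpow_const (Or.inl ?_)))).mul continuousAt_const
      simp only [Pi.sub_apply, div_one]
      linarith
    have := hc.tendsto
    simp only [div_one] at this
    exact this.mono_left nhdsWithin_le_nhds
  refine ge_of_tendsto hlim ?_
  filter_upwards [Ioo_mem_nhdsLT hR0] with R hR
  have hRpos : 0 < R := (norm_nonneg _).trans_lt hR.1
  have hφR : ‖φ 0‖ < R := by
    have := hmax (show (0 : Eucl n) ∈ closedBall 0 1 by simp)
    simp only [smul_zero, mem_ofPred_eq] at this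
    exact this.trans_lt hR.1
  have h1 : 0 < 1 - ‖φ 0‖ / R := by rw [sub_pos, div_lt_one hRpos]; exact hφR
  have h2 := (hspec 0 h0).1
  exact (hest R hR).2.trans (mul_le_mul_of_nonneg_left (hN R ⟨hRpos.le, hR.2⟩) (by positivity))

/-- The normalized surface measure is a rotation-invariant probability measure, unless the
normalizing constant is degenerate and the measure vanishes. -/
lemma sphMeasure_spec (n : ℕ) : sphMeasure n = 0 ∨ SphProb n (sphMeasure n) := by
  set H : Measure (Eucl n) := Measure.hausdorffMeasure ((n : ℝ) - 1) with hH
  have hS : MeasurableSet (uSphere n) := isClosed_sphere.measurableSet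
  have hdef : sphMeasure n = (H (uSphere n))⁻¹ • H.restrict (uSphere n) := rfl
  rcases eq_or_ne (H (uSphere n)) 0 with h0 | h0
  · left
    rw [hdef, Measure.restrict_eq_zero.2 h0, smul_zero]
  rcases eq_or_ne (H (uSphere n)) ⊤ with h1 | h1
  · left
    rw [hdef, h1, ENNReal.inv_top, zero_smul]
  right
  rw [hdef]
  refine ⟨⟨?_⟩, ?_, fun A => ?_⟩
  · rw [Measure.smul_apply, Measure.restrict_apply_univ, smul_eq_mul, ENNReal.inv_mul_cancel h0 h1]
  · exact Measure.ae_smul_measure (ae_restrict_mem hS) _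
  · have hA : MeasurePreserving A H H :=
      A.toIsometryEquiv.measurePreserving_hausdorffMeasure _
    have hpre : A ⁻¹' uSphere n = uSphere n := by
      ext x; simp [uSphere]
    have := hA.restrict_preimage hS
    rw [hpre] at this
    exact this.smul_measure _

/-- The bound for the integral means of `wco φ ψ f`. -/
lemma wco_mean_le {n : ℕ} (hn : 2 ≤ n) {p : ℝ} (hp : 1 < p) {φ : Eucl n → Eucl n}
    (hφ : IsMobiusRestr n φ (uBall n)) (hmaps : MapsTo φ (uBall n) (uBall n)) {c : ℂ}
    {ψ : Eucl n → ℂ} (hψ : ∀ x ∈ uBall n, ψ x = c * (confWt φ x : ℂ)) {S : ℝ}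
    (hS : ∀ x ∈ uBall n, ‖ψ x‖ ≤ S) {f : Eucl n → ℂ} (hf : HarmOn f (uBall n)) {N : ℝ}
    (hN : ∀ R ∈ Ico (0 : ℝ) 1, (∫ η, ‖f (R • η)‖ ^ p ∂(sphMeasure n)) ^ (1 / p) ≤ N) {r : ℝ}
    (hr : r ∈ Ico (0 : ℝ) 1) :
    (∫ ζ, ‖wco φ ψ f (r • ζ)‖ ^ p ∂(sphMeasure n)) ^ (1 / p) ≤
      ((1 + ‖φ 0‖) * (1 - ‖φ 0‖) ^ (1 - (n : ℝ)) * ‖ψ 0‖) ^ (1 / p) * S ^ (1 - 1 / p) * N := by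
  have hp0 : 0 < p := by linarith
  have h0 : (0 : Eucl n) ∈ uBall n := by simp [uBall]
  have hφ0 : 0 < 1 - ‖φ 0‖ := by
    have : ‖φ 0‖ < 1 := by simpa [uBall] using hmaps h0
    linarith
  have hS0 : 0 ≤ S := (norm_nonneg _).trans (hS 0 h0)
  have hN0 : 0 ≤ N := le_trans (Real.rpow_nonneg (integral_nonneg fun _ => by positivity) _)
    (hN 0 (by simp))
  rcases sphMeasure_spec n with hz | h
  · rw [hz, integral_zero_measure, Real.zero_rpow (by positivity)]
    positivity
  obtain ⟨-, hspec⟩ := confWt_spec hn hφ hmaps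
  have hN' : ∀ R ∈ Ico (0 : ℝ) 1, ∫ η, ‖f (R • η)‖ ^ p ∂(sphMeasure n) ≤ N ^ p := by
    intro R hR
    have hI : 0 ≤ ∫ η, ‖f (R • η)‖ ^ p ∂(sphMeasure n) := integral_nonneg fun _ => by positivity
    have := Real.rpow_le_rpow (Real.rpow_nonneg hI _) (hN R hR) hp0.le
    rwa [← Real.rpow_mul hI, one_div_mul_cancel hp0.ne', Real.rpow_one] at this
  obtain ⟨hint, hest⟩ := h.estimate hn hp hφ hmaps hf hN' hr
  have hnorm : ∀ x ∈ uBall n, ‖ψ x‖ = ‖c‖ * confWt φ x := fun x hx => by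
    rw [hψ x hx, norm_mul, Complex.norm_real, Real.norm_of_nonneg (hspec x hx).1.le]
  -- `|ψ|^p ≤ S^(p-1) |ψ|`, and `|ψ|` is `|c|` times the conformal weight
  have hmono : ∫ ζ, ‖wco φ ψ f (r • ζ)‖ ^ p ∂(sphMeasure n) ≤
      ∫ ζ, S ^ (p - 1) * ‖c‖ * (confWt φ (r • ζ) * ‖f (φ (r • ζ))‖ ^ p) ∂(sphMeasure n) := by
    refine integral_mono_of_nonneg (Eventually.of_forall fun _ => by positivity)
      (hint.const_mul _) ?_
    filter_upwards [h.supp] with ζ hζ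
    have hrζ : r • ζ ∈ uBall n := by
      rw [mem_sphere_zero_iff_norm] at hζ
      rw [uBall, mem_ball_zero_iff, norm_smul, Real.norm_of_nonneg hr.1, hζ, mul_one]
      exact hr.2
    have e : ‖ψ (r • ζ)‖ ^ p = ‖ψ (r • ζ)‖ ^ (p - 1) * ‖ψ (r • ζ)‖ := by
      rw [← Real.rpow_add_one' (norm_nonneg _) (by linarith), sub_add_cancel]
    rw [wco, norm_mul, Real.mul_rpow (norm_nonneg _) (norm_nonneg _), e]
    have h1 : ‖ψ (r • ζ)‖ ^ (p - 1) ≤ S ^ (p - 1) :=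
      Real.rpow_le_rpow (norm_nonneg _) (hS _ hrζ) (by linarith)
    calc ‖ψ (r • ζ)‖ ^ (p - 1) * ‖ψ (r • ζ)‖ * ‖f (φ (r • ζ))‖ ^ p
        ≤ S ^ (p - 1) * ‖ψ (r • ζ)‖ * ‖f (φ (r • ζ))‖ ^ p := by gcongr
      _ = _ := by rw [hnorm _ hrζ]; ring
  rw [integral_const_mul] at hmono
  have hfin : ∫ ζ, ‖wco φ ψ f (r • ζ)‖ ^ p ∂(sphMeasure n) ≤
      ((1 + ‖φ 0‖) * (1 - ‖φ 0‖) ^ (1 - (n : ℝ)) * ‖ψ 0‖) * S ^ (p - 1) * N ^ p := by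
    refine hmono.trans ((mul_le_mul_of_nonneg_left hest (by positivity)).trans (le_of_eq ?_))
    rw [hnorm 0 h0]
    ring
  have := Real.rpow_le_rpow (integral_nonneg fun _ => by positivity) hfin
    (show 0 ≤ 1 / p by positivity)
  refine this.trans (le_of_eq ?_)
  rw [Real.mul_rpow (by positivity) (by positivity), Real.mul_rpow (by positivity) (by positivity),
    ← Real.rpow_mul hS0, ← Real.rpow_mul hN0, mul_one_div_cancel hp0.ne', Real.rpow_one]
  congr 3
  field_simp

/-- Case II, (3.9): For `n ≥ 3`, `1 < p < ∞`, `φ` the restriction to `B`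
of a Möbius transformation of `ℝ̂ⁿ` with `φ(B) ⊆ B` and `ψ = c·|Dφ|^{(n−2)/2}`: `ψ` is
bounded on `B`, `W_{φ,ψ}` is bounded on `h^p(B)`, and
`‖W_{φ,ψ}‖ ≤ ((1+|φ(0)|)(1−|φ(0)|)^{1−n}|ψ(0)|)^{1/p}‖ψ‖_∞^{1−1/p}`. -/
theorem wco_bound_hp (n : ℕ) (hn : 3 ≤ n) (p : ℝ) (hp : 1 < p)
    (φ : Eucl n → Eucl n) (hφ : IsMobiusRestr n φ (uBall n))
    (hmaps : Set.MapsTo φ (uBall n) (uBall n))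
    (c : ℂ) (ψ : Eucl n → ℂ)
    (hψ : ∀ x ∈ uBall n, ψ x = c * (↑(normDeriv φ x ^ (((n : ℝ) - 2) / 2)) : ℂ)) :
    BddAbove ((fun x => ‖ψ x‖) '' uBall n) ∧
    (∀ f, MemHp n (ENNReal.ofReal p) f → MemHp n (ENNReal.ofReal p) (wco φ ψ f)) ∧
    ∀ f, MemHp n (ENNReal.ofReal p) f →
      hpNorm n (ENNReal.ofReal p) (wco φ ψ f) ≤
        ((1 + ‖φ 0‖) * (1 - ‖φ 0‖) ^ (1 - (n : ℝ)) * ‖ψ 0‖) ^ (1 / p) *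
          sSup ((fun x => ‖ψ x‖) '' uBall n) ^ (1 - 1 / p) *
          hpNorm n (ENNReal.ofReal p) f := by
  have hn2 : 2 ≤ n := by omega
  obtain ⟨⟨M, hM⟩, hspec⟩ := confWt_spec hn2 hφ hmaps
  have hψ' : ∀ x ∈ uBall n, ψ x = c * (confWt φ x : ℂ) := hψ
  have h0 : (0 : Eucl n) ∈ uBall n := by simp [uBall]
  have hbdd : BddAbove ((fun x => ‖ψ x‖) '' uBall n) := by
    refine ⟨‖c‖ * M, ?_⟩
    rintro _ ⟨x, hx, rfl⟩
    dsimp only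
    rw [hψ' x hx, norm_mul, Complex.norm_real, Real.norm_of_nonneg (hspec x hx).1.le]
    exact mul_le_mul_of_nonneg_left (hM x hx) (norm_nonneg _)
  have hp' : (ENNReal.ofReal p).toReal = p := ENNReal.toReal_ofReal (by linarith)
  have hmean : ∀ f, MemHp n (ENNReal.ofReal p) f → ∀ v ∈ hpNormSet n p (wco φ ψ f),
      v ≤ ((1 + ‖φ 0‖) * (1 - ‖φ 0‖) ^ (1 - (n : ℝ)) * ‖ψ 0‖) ^ (1 / p) *
          sSup ((fun x => ‖ψ x‖) '' uBall n) ^ (1 - 1 / p) *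
          hpNorm n (ENNReal.ofReal p) f := by
    rintro f ⟨hf, hfb⟩ _ ⟨r, hr, rfl⟩
    rw [if_neg ENNReal.ofReal_ne_top, hp'] at hfb
    rw [hpNorm, if_neg ENNReal.ofReal_ne_top, hp']
    exact wco_mean_le hn2 hp hφ hmaps hψ' (fun x hx => le_csSup hbdd ⟨x, hx, rfl⟩) hf
      (fun R hR => le_csSup hfb ⟨R, hR, rfl⟩) hr
  refine ⟨hbdd, fun f hf => ⟨?_, ?_⟩, fun f hf => ?_⟩
  · have hloc : ∀ x ∈ uBall n, ContDiffAt ℝ 2 (wco φ ψ f) x ∧ lap (wco φ ψ f) x = 0 := by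
      intro x hx
      have hev : wco φ ψ f =ᶠ[𝓝 x] fun y => confWt φ y • (c * f (φ y)) :=
        eventually_of_mem (isOpen_ball.mem_nhds hx) fun y hy => by
          simp only [wco, hψ' y hy, Complex.real_smul]
          ring
      have h1 := hf.1.1.contDiffAt (isOpen_ball.mem_nhds (hmaps hx))
      have h2 := lap_clm_comp (ContinuousLinearMap.mul ℝ ℂ c) h1
      rw [hf.1.2 _ (hmaps hx), map_zero] at h2
      obtain ⟨h3, h4⟩ := (hspec x hx).2.2 ℂ (fun z => c * f z)
        ((ContinuousLinearMap.mul ℝ ℂ c).contDiff.contDiffAt.comp _ h1) h2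
      exact ⟨h3.congr_of_eventuallyEq hev, (lap_congr hev).trans h4⟩
    exact ⟨fun x hx => (hloc x hx).1.contDiffWithinAt, fun x hx => (hloc x hx).2⟩
  · rw [if_neg ENNReal.ofReal_ne_top, hp']
    exact ⟨_, hmean f hf⟩
  · rw [hpNorm, if_neg ENNReal.ofReal_ne_top, hp']
    exact csSup_le ⟨_, 0, by simp, rfl⟩ (hmean f hf)
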